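/- arXiv:1409.2138 — 5 statements merged into one kernel-verified Lean document; each statement's English description precedes it below -/
import Mathlib

section
/- For every constant ε ∈ (0,1) there is a constant C > 0 such that the following holds. Let α ∈ (n^{-1/10}, 1), let k = ⌈C/(αε²)⌉, and let E' be the multiset union of k independent random edge sets E'_1,...,E'_k on vertex set [n], where each E'_i includes each of the C(n,2) potential edges independently with probability α/(2n); let m denote the total number of edges of E' counted with multiplicity. Then with probability 1 − o(1) as n → ∞, every bipartition (S, [n]∖S) of [n] is crossed by at most (1+ε)·m/2 edges of E' (counted with multiplicity). -/
open Finset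

/-- The set of potential edges of a graph on vertex set `Fin n`: all non-diagonal
unordered pairs. -/
noncomputable def potentialEdges (n : ℕ) : Finset (Sym2 (Fin n)) :=
  univ.filter (fun e => ¬ e.IsDiag)

/-- The probability that a random edge set (each potential edge included independently
with probability `p`) equals exactly `S`. -/
noncomputable def erWeight (n : ℕ) (p : ℝ) (S : Finset (Sym2 (Fin n))) : ℝ :=
  p ^ S.card * (1 - p) ^ ((potentialEdges n).card - S.card)

/-- The edge `e` crosses the bipartition `(S, [n] ∖ S)`: one endpoint of `e` lies in `S`
and the other does not. -/
def crosses {n : ℕ} (S : Finset (Fin n)) (e : Sym2 (Fin n)) : Prop :=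
  ∃ u v : Fin n, e = s(u, v) ∧ u ∈ S ∧ v ∉ S

lemma pe_card (n : ℕ) : ((potentialEdges n).card : ℝ) = (n:ℝ) * (n - 1) / 2 := by
  have h := Sym2.card_subtype_not_diag (α := Fin n)
  rw [Fintype.card_subtype] at h
  have h2 : (potentialEdges n).card = n.choose 2 := by
    unfold potentialEdges
    rw [Fintype.card_fin] at h
    convert h
  rw [h2, Nat.cast_choose_two]

open Classical in
lemma cross_card (n : ℕ) (S : Finset (Fin n)) :
    4 * (((potentialEdges n).filter (crosses S)).card : ℝ) ≤ (n:ℝ)^2 := by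
  have h1 : (potentialEdges n).filter (crosses S) ⊆
      (S ×ˢ Sᶜ).image (fun x => s(x.1, x.2)) := by
    intro e he
    obtain ⟨u, v, rfl, hu, hv⟩ := (Finset.mem_filter.1 he).2
    exact Finset.mem_image.2 ⟨(u, v), by simp [hu, hv], rfl⟩
  have h2 := (Finset.card_le_card h1).trans Finset.card_image_le
  rw [Finset.card_product] at h2
  have h3 : S.card + Sᶜ.card = n := by
    rw [Finset.card_add_card_compl, Fintype.card_fin]
  have h2' : (((potentialEdges n).filter (crosses S)).card : ℝ) ≤ S.card * (Sᶜ.card : ℝ) := by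
    exact_mod_cast h2
  have h3' : (S.card : ℝ) + (Sᶜ.card : ℝ) = n := by exact_mod_cast h3
  rw [← h3']
  nlinarith [sq_nonneg ((S.card : ℝ) - (Sᶜ.card : ℝ))]

lemma gen_one (n : ℕ) (p : ℝ) (g : Sym2 (Fin n) → ℝ) :
    ∑ s ∈ (potentialEdges n).powerset, erWeight n p s * ∏ e ∈ s, g e
      = ∏ e ∈ potentialEdges n, (p * g e + (1 - p)) := by
  classical
  rw [Finset.prod_add]
  refine Finset.sum_congr rfl fun s hs => ?_
  rw [Finset.mem_powerset] at hs
  rw [Finset.prod_mul_distrib, Finset.prod_const, Finset.prod_const, Finset.card_sdiff_of_subset hs]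
  unfold erWeight
  ring

lemma gen_k (n k : ℕ) (p : ℝ) (g : Sym2 (Fin n) → ℝ) :
    ∑ f ∈ Fintype.piFinset (fun _ : Fin k => (potentialEdges n).powerset),
      (∏ i, erWeight n p (f i)) * ∏ i, ∏ e ∈ f i, g e
      = (∏ e ∈ potentialEdges n, (p * g e + (1 - p))) ^ k := by
  classical
  have := Finset.prod_univ_sum (fun _ : Fin k => (potentialEdges n).powerset)
    (fun _ s => erWeight n p s * ∏ e ∈ s, g e)
  simp only [gen_one, Finset.prod_const, Finset.card_univ, Fintype.card_fin,
    Finset.prod_mul_distrib] at this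
  exact this.symm

lemma total_k (n k : ℕ) (p : ℝ) :
    ∑ f ∈ Fintype.piFinset (fun _ : Fin k => (potentialEdges n).powerset),
      (∏ i, erWeight n p (f i)) = 1 := by
  have := gen_k n k p (fun _ => 1)
  simpa using this

open Classical in
noncomputable def wgt {n : ℕ} (ε : ℝ) (S : Finset (Fin n)) (e : Sym2 (Fin n)) : ℝ :=
  if crosses S e then 1 - ε else -(1 + ε)

open Classical in
lemma sum_wgt {n : ℕ} (ε : ℝ) (S : Finset (Fin n)) (s : Finset (Sym2 (Fin n))) :
    ∑ e ∈ s, wgt ε S e = 2 * ((s.filter (crosses S)).card : ℝ) - (1 + ε) * s.card := by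
  have : ∀ e ∈ s, wgt ε S e = 2 * (if crosses S e then (1:ℝ) else 0) - (1 + ε) := by
    intro e _
    unfold wgt
    split_ifs <;> ring
  rw [Finset.sum_congr rfl this, Finset.sum_sub_distrib, ← Finset.mul_sum, Finset.sum_boole]
  simp only [Finset.sum_const, nsmul_eq_mul]
  ring

lemma exp_sum_bound {n : ℕ} (ε : ℝ) (h0 : 0 < ε) (h1 : ε < 1) (S : Finset (Fin n))
    (hn : 4 / ε ≤ (n:ℝ) - 1) :
    ∑ e ∈ potentialEdges n, (Real.exp (ε / 8 * wgt ε S e) - 1) ≤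
      - (ε^2 * n * (n - 1) / 64) := by
  classical
  have hp : ∀ e ∈ potentialEdges n, Real.exp (ε / 8 * wgt ε S e) - 1 ≤
      ε / 8 * wgt ε S e + ε^2/16 := by
    intro e _
    have hw : |wgt ε S e| ≤ 2 := by
      unfold wgt
      rw [abs_le]
      split_ifs <;> constructor <;> linarith
    have ha : |ε / 8 * wgt ε S e| ≤ ε / 4 := by
      rw [abs_mul, abs_of_pos (by positivity)]
      nlinarith
    have hb := (abs_le.1 (Real.abs_exp_sub_one_sub_id_le (ha.trans (by linarith)))).2
    have hc : (ε / 8 * wgt ε S e)^2 ≤ (ε/4)^2 := sq_le_sq' (abs_le.1 ha).1 (abs_le.1 ha).2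
    nlinarith
  refine (Finset.sum_le_sum hp).trans ?_
  rw [Finset.sum_add_distrib, ← Finset.mul_sum, sum_wgt, Finset.sum_const, nsmul_eq_mul, pe_card]
  have hc := cross_card n S
  set c := (((potentialEdges n).filter (crosses S)).card : ℝ)
  have hn' : 4 ≤ ε * ((n:ℝ) - 1) := by
    rw [div_le_iff₀ h0] at hn
    linarith
  have e1 : ε / 8 * (2 * c) ≤ ε / 8 * ((n:ℝ)^2 / 2) := by
    apply mul_le_mul_of_nonneg_left _ (by positivity)
    linarith
  have e2 : (ε * n) * 4 ≤ (ε * n) * (ε * ((n:ℝ) - 1)) :=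
    mul_le_mul_of_nonneg_left hn' (by positivity)
  nlinarith

lemma mgf_bound (n k : ℕ) (ε p : ℝ) (h0 : 0 < ε) (h1 : ε < 1) (S : Finset (Fin n))
    (hn : 4 / ε ≤ (n:ℝ) - 1) (hp0 : 0 ≤ p) (hp1 : p ≤ 1) (hk : 128 ≤ k * p * n * ε^2) :
    (∏ e ∈ potentialEdges n, (p * Real.exp (ε / 8 * wgt ε S e) + (1 - p))) ^ k ≤
      Real.exp (2 - 2 * n) := by
  have hle : ∏ e ∈ potentialEdges n, (p * Real.exp (ε / 8 * wgt ε S e) + (1 - p)) ≤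
      Real.exp (p * ∑ e ∈ potentialEdges n, (Real.exp (ε / 8 * wgt ε S e) - 1)) := by
    rw [Finset.mul_sum, Real.exp_sum]
    apply Finset.prod_le_prod
    · intro e _
      have := Real.exp_pos (ε / 8 * wgt ε S e)
      have := mul_nonneg hp0 this.le
      linarith
    · intro e _
      have := Real.add_one_le_exp (p * (Real.exp (ε / 8 * wgt ε S e) - 1))
      linarith
  have hnn : 0 ≤ ∏ e ∈ potentialEdges n, (p * Real.exp (ε / 8 * wgt ε S e) + (1 - p)) := by
    apply Finset.prod_nonneg
    intro e _
    have := mul_nonneg hp0 (Real.exp_pos (ε / 8 * wgt ε S e)).le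
    linarith
  refine (pow_le_pow_left₀ hnn hle k).trans ?_
  rw [← Real.exp_nat_mul, Real.exp_le_exp]
  have hb := exp_sum_bound ε h0 h1 S hn
  have h4 : 0 < (n:ℝ) - 1 := lt_of_lt_of_le (by positivity) hn
  have h5 := mul_le_mul_of_nonneg_left hb (mul_nonneg (Nat.cast_nonneg (α := ℝ) k) hp0)
  have h6 := mul_le_mul_of_nonneg_right hk h4.le
  nlinarith

open Classical in
/-- for every constant `ε ∈ (0,1)` there is `C > 0` such that for any choice
`α = α(n) ∈ (n^{-1/10}, 1)`, with `k = ⌈C/(αε²)⌉`, if `E' = E'_1 ∪ ... ∪ E'_k` is the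
multiset union of `k` independent random edge sets on `[n]`, each including each potential
edge independently with probability `α/(2n)`, and `m` is the total number of edges counted
with multiplicity, then with probability `1 - o(1)` as `n → ∞` every bipartition
`(S, [n] ∖ S)` is crossed by at most `(1+ε)·m/2` edges of `E'` (with multiplicity). -/
theorem stmt3 :
    ∀ ε : ℝ, 0 < ε → ε < 1 →
    ∃ C : ℝ, 0 < C ∧
      ∀ α : ℕ → ℝ,
        (∀ n : ℕ, 2 ≤ n → (n : ℝ) ^ (-(1 : ℝ) / 10) < α n ∧ α n < 1) →
        Filter.Tendsto
          (fun n : ℕ =>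
            ∑ f ∈ Fintype.piFinset
                (fun _ : Fin ⌈C / (α n * ε ^ 2)⌉₊ => (potentialEdges n).powerset),
              if ∀ S : Finset (Fin n),
                    ((∑ i, ((f i).filter (crosses S)).card : ℕ) : ℝ) ≤
                      (1 + ε) * ((∑ i, (f i).card : ℕ) : ℝ) / 2
                then ∏ i, erWeight n (α n / (2 * n)) (f i) else 0)
          Filter.atTop (nhds 1) := by
  intro ε h0 h1
  refine ⟨256, by norm_num, fun α hα => ?_⟩
  have hlim : Filter.Tendsto (fun n : ℕ => 1 - Real.exp (2 - (n:ℝ))) Filter.atTop (nhds 1) := by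
    have h : Filter.Tendsto (fun n : ℕ => Real.exp (2 - (n:ℝ))) Filter.atTop (nhds 0) := by
      refine Real.tendsto_exp_atBot.comp ?_
      exact Filter.tendsto_atBot_add_const_left _ 2
        (Filter.tendsto_neg_atTop_atBot.comp tendsto_natCast_atTop_atTop)
    simpa using h.const_sub 1
  have hW : ∀ n : ℕ, 2 ≤ n → ∀ s, 0 ≤ erWeight n (α n / (2 * n)) s := by
    intro n hn s
    have ha := hα n hn
    have hn' : (2:ℝ) ≤ n := by exact_mod_cast hn
    have ha0 : 0 < α n := lt_of_le_of_lt (by positivity) ha.1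
    have hp1 : α n / (2 * n) ≤ 1 := by
      rw [div_le_one (by positivity)]
      linarith [ha.2]
    unfold erWeight
    have : 0 ≤ 1 - α n / (2 * n) := by linarith
    positivity
  refine tendsto_of_tendsto_of_tendsto_of_le_of_le' hlim tendsto_const_nhds ?_ ?_
  · obtain ⟨N, hN⟩ := exists_nat_ge (4 / ε + 1)
    filter_upwards [Filter.eventually_ge_atTop 2, Filter.eventually_ge_atTop N] with n hn hnN
    have ha := hα n hn
    have hn' : (2:ℝ) ≤ n := by exact_mod_cast hn
    have hnN' : (N:ℝ) ≤ n := by exact_mod_cast hnN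
    have ha0 : 0 < α n := lt_of_le_of_lt (by positivity) ha.1
    have hp1 : α n / (2 * n) ≤ 1 := by
      rw [div_le_one (by positivity)]
      linarith [ha.2]
    have hp0 : 0 ≤ α n / (2 * n) := by positivity
    have hk : 128 ≤ (⌈256 / (α n * ε ^ 2)⌉₊ : ℝ) * (α n / (2 * n)) * n * ε^2 := by
      have h := Nat.le_ceil (256 / (α n * ε ^ 2))
      rw [div_le_iff₀ (by positivity)] at h
      have e : (⌈256 / (α n * ε ^ 2)⌉₊ : ℝ) * (α n / (2 * n)) * n * ε^2
          = (⌈256 / (α n * ε ^ 2)⌉₊ : ℝ) * (α n * ε^2) / 2 := by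
        field_simp
      rw [e]
      linarith
    have hW' := hW n hn
    generalize ⌈256 / (α n * ε ^ 2)⌉₊ = k at *
    generalize α n / (2 * n) = p at *
    have hbad : ∑ S : Finset (Fin n),
        ∑ f ∈ Fintype.piFinset (fun _ : Fin k => (potentialEdges n).powerset),
          (∏ i, erWeight n p (f i)) * ∏ i, ∏ e ∈ f i, Real.exp (ε / 8 * wgt ε S e)
        ≤ Real.exp (2 - n) := by
      have h2 : (2:ℝ)^n ≤ Real.exp n := by
        rw [← Real.exp_one_pow]
        exact pow_le_pow_left₀ (by norm_num) (by linarith [Real.add_one_le_exp (1:ℝ)]) n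
      calc _ ≤ ∑ S : Finset (Fin n), Real.exp (2 - 2 * n) := by
            refine Finset.sum_le_sum fun S _ => ?_
            rw [gen_k]
            exact mgf_bound n k ε p h0 h1 S (by linarith) hp0 hp1 hk
        _ = 2^n * Real.exp (2 - 2 * n) := by simp
        _ ≤ Real.exp n * Real.exp (2 - 2 * n) :=
            mul_le_mul_of_nonneg_right h2 (Real.exp_pos _).le
        _ = Real.exp (2 - n) := by
            rw [← Real.exp_add]
            congr 1
            ring
    rw [Finset.sum_comm] at hbad
    have htot := total_k n k p
    have key : ∑ f ∈ Fintype.piFinset (fun _ : Fin k => (potentialEdges n).powerset),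
        ((∏ i, erWeight n p (f i)) - ∑ S : Finset (Fin n),
          (∏ i, erWeight n p (f i)) * ∏ i, ∏ e ∈ f i, Real.exp (ε / 8 * wgt ε S e)) ≤
        ∑ f ∈ Fintype.piFinset (fun _ : Fin k => (potentialEdges n).powerset),
          if ∀ S : Finset (Fin n), ((∑ i, ((f i).filter (crosses S)).card : ℕ) : ℝ) ≤
                      (1 + ε) * ((∑ i, (f i).card : ℕ) : ℝ) / 2
                then ∏ i, erWeight n p (f i) else 0 := by
      refine Finset.sum_le_sum fun f _ => ?_
      have hw0 : 0 ≤ ∏ i, erWeight n p (f i) := Finset.prod_nonneg fun i _ => hW' _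
      have hterm : ∀ S : Finset (Fin n), 0 ≤
          (∏ i, erWeight n p (f i)) * ∏ i, ∏ e ∈ f i, Real.exp (ε / 8 * wgt ε S e) := fun S =>
        mul_nonneg hw0 (Finset.prod_nonneg fun i _ => Finset.prod_nonneg fun e _ =>
          (Real.exp_pos _).le)
      split_ifs with hgood
      · have := Finset.sum_nonneg (s := Finset.univ) fun S _ => hterm S
        linarith
      · push Not at hgood
        obtain ⟨S, hS⟩ := hgood
        have hs := Finset.single_le_sum (fun S _ => hterm S) (Finset.mem_univ S)
        have hge : 1 ≤ ∏ i, ∏ e ∈ f i, Real.exp (ε / 8 * wgt ε S e) := by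
          have e1 : ∏ i, ∏ e ∈ f i, Real.exp (ε / 8 * wgt ε S e) =
              Real.exp (ε / 8 * ∑ i, ∑ e ∈ f i, wgt ε S e) := by
            simp only [Finset.mul_sum, Real.exp_sum]
          rw [e1]
          apply Real.one_le_exp
          apply mul_nonneg (by positivity)
          simp only [sum_wgt, Finset.sum_sub_distrib, ← Finset.mul_sum]
          push_cast at hS
          linarith
        have := mul_le_mul_of_nonneg_left hge hw0
        linarith
    rw [Finset.sum_sub_distrib, htot] at key
    linarith
  · filter_upwards [Filter.eventually_ge_atTop 2] with n hn
    rw [← total_k n ⌈256 / (α n * ε ^ 2)⌉₊ (α n / (2 * n))]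
    refine Finset.sum_le_sum fun f _ => ?_
    split_ifs
    · exact le_rfl
    · exact Finset.prod_nonneg fun i _ => hW n hn _
end

section
/- Let A ⊆ {0,1}^n be nonempty with indicator function f : {0,1}^n → {0,1}, and let M ∈ {0,1}^{r×n} be any matrix over GF(2). Define p_M(z) = |{x ∈ A : Mx = z}| / |A| for z ∈ {0,1}^r, and let U_r denote the uniform distribution on {0,1}^r. Then ‖p_M − U_r‖²_tvd ≤ (2^{2n} / |A|²) · ∑_{s ∈ {0,1}^r, s ≠ 0} \hat{f}(M^T s)². -/
open Finset

/-- The Fourier coefficient of `g : {0,1}^m → ℝ` at `v ∈ {0,1}^m`: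
`ĝ(v) = 2^{-m} ∑_x g(x)·(−1)^{x·v}`. -/
noncomputable def booleanFourier {m : ℕ} (g : (Fin m → ZMod 2) → ℝ)
    (v : Fin m → ZMod 2) : ℝ :=
  ((2 : ℝ) ^ m)⁻¹ * ∑ x : Fin m → ZMod 2, g x * (-1 : ℝ) ^ (∑ i, (x i).val * (v i).val)

/-- The total variation distance `(1/2) ∑_ω |p ω − q ω|` between two distributions on a
finite set. -/
noncomputable def tvDist {Ω : Type*} [Fintype Ω] (p q : Ω → ℝ) : ℝ :=
  (1 / 2) * ∑ ω, |p ω - q ω|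


lemma chi_add (a b : ZMod 2) : (-1 : ℝ) ^ (a + b).val = (-1) ^ a.val * (-1) ^ b.val := by
  rw [ZMod.val_add, ← pow_add]
  exact (neg_one_pow_eq_pow_mod_two _).symm

lemma chi_mul (a b : ZMod 2) : (-1 : ℝ) ^ (a * b).val = (-1) ^ (a.val * b.val) := by
  rw [ZMod.val_mul]
  exact (neg_one_pow_eq_pow_mod_two _).symm

lemma chi_sum {ι : Type*} (s : Finset ι) (f : ι → ZMod 2) :
    (-1 : ℝ) ^ (∑ i ∈ s, f i).val = ∏ i ∈ s, (-1 : ℝ) ^ (f i).val := by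
  classical
  induction s using Finset.induction_on with
  | empty => simp
  | insert a s ha ih => rw [Finset.sum_insert ha, Finset.prod_insert ha, chi_add, ih]

lemma chi_dot {m : ℕ} (x v : Fin m → ZMod 2) :
    (-1 : ℝ) ^ (∑ i, (x i).val * (v i).val) = (-1 : ℝ) ^ (x ⬝ᵥ v).val := by
  rw [dotProduct, chi_sum, ← Finset.prod_pow_eq_pow_sum]
  exact Finset.prod_congr rfl fun i _ => (chi_mul _ _).symm

lemma chi_one (w : ZMod 2) : ∑ a : ZMod 2, (-1 : ℝ) ^ (w * a).val = if w = 0 then 2 else 0 := by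
  have h : ∀ f : ZMod 2 → ℝ, ∑ a, f a = f 0 + f 1 := fun f => Fin.sum_univ_two f
  rw [h]
  have h1 : (1 : ZMod 2).val = 1 := rfl
  have : w = 0 ∨ w = 1 := by revert w; decide
  rcases this with rfl | rfl
  · norm_num
  · norm_num [h1]

lemma chi_orth {r : ℕ} (w : Fin r → ZMod 2) :
    ∑ s : Fin r → ZMod 2, (-1 : ℝ) ^ (w ⬝ᵥ s).val = if w = 0 then 2 ^ r else 0 := by
  have h := Finset.prod_univ_sum (fun _ : Fin r => (univ : Finset (ZMod 2)))
    (fun i a => (-1 : ℝ) ^ (w i * a).val)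
  simp only [dotProduct, chi_sum]
  rw [Fintype.piFinset_univ] at h
  rw [← h]
  simp only [chi_one]
  split_ifs with hw
  · simp [hw]
  · obtain ⟨i, hi⟩ := Function.ne_iff.mp hw
    exact Finset.prod_eq_zero (Finset.mem_univ i) (if_neg hi)

lemma four_eq {n r : ℕ} (A : Finset (Fin n → ZMod 2)) (M : Matrix (Fin r) (Fin n) (ZMod 2))
    (s : Fin r → ZMod 2) :
    booleanFourier (fun x : Fin n → ZMod 2 => if x ∈ A then (1 : ℝ) else 0)
      (Matrix.mulVec M.transpose s)
    = ((2 : ℝ) ^ n)⁻¹ * ∑ x ∈ A, (-1 : ℝ) ^ (Matrix.mulVec M x ⬝ᵥ s).val := by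
  unfold booleanFourier
  simp only [chi_dot, ite_mul, one_mul, zero_mul, Finset.sum_ite_mem, Finset.univ_inter]
  congr 1
  refine Finset.sum_congr rfl fun x _ => ?_
  rw [Matrix.mulVec_transpose, dotProduct_comm, ← Matrix.dotProduct_mulVec, dotProduct_comm]

lemma parseval {n r : ℕ} (A : Finset (Fin n → ZMod 2)) (M : Matrix (Fin r) (Fin n) (ZMod 2)) :
    ∑ s : Fin r → ZMod 2, (∑ x ∈ A, (-1 : ℝ) ^ (Matrix.mulVec M x ⬝ᵥ s).val) ^ 2
    = 2 ^ r * ∑ z, ((A.filter (fun x => Matrix.mulVec M x = z)).card : ℝ) ^ 2 := by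
  have h1 : ∀ s : Fin r → ZMod 2, (∑ x ∈ A, (-1 : ℝ) ^ (Matrix.mulVec M x ⬝ᵥ s).val) ^ 2
      = ∑ x ∈ A, ∑ y ∈ A, (-1 : ℝ) ^ ((Matrix.mulVec M x + Matrix.mulVec M y) ⬝ᵥ s).val := by
    intro s
    rw [sq, Finset.sum_mul_sum]
    simp only [add_dotProduct, chi_add]
  simp only [h1]
  have h2 : ∀ a b : Fin r → ZMod 2, a + b = 0 ↔ a = b := by
    intro a b
    have hb : -b = b := funext fun i => ZMod.neg_eq_self_mod_two (b i)
    rw [add_eq_zero_iff_eq_neg, hb]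
  have h3 : ∀ z, ((A.filter (fun x => Matrix.mulVec M x = z)).card : ℝ) ^ 2
      = ∑ x ∈ A, ∑ y ∈ A, if Matrix.mulVec M x = z then (if Matrix.mulVec M y = z then (1 : ℝ) else 0) else 0 := by
    intro z
    rw [Finset.card_filter, sq]
    push_cast
    rw [Finset.sum_mul_sum]
    refine Finset.sum_congr rfl fun x _ => Finset.sum_congr rfl fun y _ => ?_
    split_ifs <;> simp
  simp only [h3]
  have h4 : ∀ F : (Fin r → ZMod 2) → (Fin n → ZMod 2) → (Fin n → ZMod 2) → ℝ,
      ∑ z, ∑ x ∈ A, ∑ y ∈ A, F z x y = ∑ x ∈ A, ∑ y ∈ A, ∑ z, F z x y := by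
    intro F
    rw [Finset.sum_comm]
    exact Finset.sum_congr rfl fun x _ => Finset.sum_comm
  rw [h4, h4, Finset.mul_sum]
  refine Finset.sum_congr rfl fun x _ => ?_
  rw [Finset.mul_sum]
  refine Finset.sum_congr rfl fun y _ => ?_
  rw [chi_orth, Finset.sum_ite_eq]
  simp [h2, eq_comm]

/-- for nonempty `A ⊆ {0,1}^n` with indicator `f`, any `M ∈ {0,1}^{r×n}`
over GF(2), `p_M(z) = |{x ∈ A : Mx = z}|/|A|`, and `U_r` uniform on `{0,1}^r`:
`‖p_M − U_r‖²_tvd ≤ (2^{2n}/|A|²) · ∑_{s ≠ 0} f̂(Mᵀ s)²`. -/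
theorem stmt5 (n r : ℕ) (A : Finset (Fin n → ZMod 2)) (hA : A.Nonempty)
    (M : Matrix (Fin r) (Fin n) (ZMod 2)) :
    (tvDist
        (fun z : Fin r → ZMod 2 =>
          ((A.filter (fun x => Matrix.mulVec M x = z)).card : ℝ) / (A.card : ℝ))
        (fun _ : Fin r → ZMod 2 => ((2 : ℝ) ^ r)⁻¹)) ^ 2
      ≤ (2 : ℝ) ^ (2 * n) / (A.card : ℝ) ^ 2 *
          ∑ s ∈ (univ : Finset (Fin r → ZMod 2)) \ {0},
            booleanFourier (fun x : Fin n → ZMod 2 => if x ∈ A then (1 : ℝ) else 0)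
              (Matrix.mulVec M.transpose s) ^ 2 := by
  have hc : (0 : ℝ) < A.card := by exact_mod_cast hA.card_pos
  have hsum : ∑ z, ((A.filter (fun x => Matrix.mulVec M x = z)).card : ℝ) = A.card := by
    have := Finset.card_eq_sum_card_fiberwise (f := fun x => Matrix.mulVec M x) (s := A)
      (t := univ) (fun _ _ => by simp)
    exact_mod_cast this.symm
  have hP := parseval A M
  rw [← Finset.add_sum_erase _ _ (Finset.mem_univ (0 : Fin r → ZMod 2))] at hP
  simp only [four_eq, Finset.sdiff_singleton_eq_erase, mul_pow, ← Finset.mul_sum]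
  simp only [dotProduct_zero, ZMod.val_zero, pow_zero, Finset.sum_const, nsmul_eq_mul,
    mul_one] at hP
  generalize hT : ∑ s ∈ (univ : Finset (Fin r → ZMod 2)).erase 0,
    (∑ x ∈ A, (-1 : ℝ) ^ (Matrix.mulVec M x ⬝ᵥ s).val) ^ 2 = T at hP ⊢
  have hT0 : 0 ≤ T := hT ▸ Finset.sum_nonneg fun _ _ => sq_nonneg _
  generalize hN : (fun z => ((A.filter (fun x => Matrix.mulVec M x = z)).card : ℝ)) = N at *
  have hN' : ∀ z, ((A.filter (fun x => Matrix.mulVec M x = z)).card : ℝ) = N z :=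
    fun z => congrFun hN z
  simp only [hN'] at hP hsum ⊢
  generalize (A.card : ℝ) = c at *
  have hR : (2 : ℝ) ^ (2 * n) / c ^ 2 * (((2 : ℝ) ^ n)⁻¹ ^ 2 * T) = T / c ^ 2 := by
    rw [pow_mul', inv_pow]
    field_simp
  rw [hR]
  have hcs := sq_sum_le_card_mul_sum_sq (s := (univ : Finset (Fin r → ZMod 2)))
    (f := fun z => |N z / c - ((2 : ℝ) ^ r)⁻¹|)
  have hcard : ((univ : Finset (Fin r → ZMod 2)).card : ℝ) = 2 ^ r := by
    simp [ZMod.card]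
  rw [hcard] at hcs
  have hexp : (2 : ℝ) ^ r * ∑ z, |N z / c - ((2 : ℝ) ^ r)⁻¹| ^ 2 = T / c ^ 2 := by
    have h1 : ∀ z, |N z / c - ((2 : ℝ) ^ r)⁻¹| ^ 2
        = (c ^ 2)⁻¹ * N z ^ 2 - 2 * c⁻¹ * ((2 : ℝ) ^ r)⁻¹ * N z + (((2 : ℝ) ^ r)⁻¹) ^ 2 := by
      intro z
      rw [sq_abs]
      field_simp
      ring
    simp only [h1]
    rw [Finset.sum_add_distrib, Finset.sum_sub_distrib, ← Finset.mul_sum, ← Finset.mul_sum, hsum,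
      Finset.sum_const, nsmul_eq_mul, hcard]
    have : T = 2 ^ r * ∑ z, N z ^ 2 - c ^ 2 := by linarith
    rw [this]
    field_simp
    ring
  rw [hexp] at hcs
  unfold tvDist
  rw [mul_pow]
  have : 0 ≤ T / c ^ 2 := by positivity
  nlinarith
end

section
/- Let c' > 0 be a real number and let A ⊆ {0,1}^n have size |A| ≥ 2^{n−c'}, with indicator function f : {0,1}^n → {0,1}. Then for every integer ℓ with 1 ≤ ℓ ≤ 4c': (2^{2n} / |A|²) · ∑_{v ∈ {0,1}^n : wt(v) = ℓ} \hat{f}(v)² ≤ (4√2 · c' / ℓ)^ℓ, where wt(v) denotes the Hamming weight of v. -/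
open Finset

theorem aux_psi (δ : ℝ) (h0 : 0 < δ) (h1 : δ ≤ 1) (y : ℝ) (hy0 : 0 ≤ y) (hy1 : y < 1) :
    2 * δ * y ≤ (1 + y) ^ δ - (1 - y) ^ δ := by
  let ψ : ℝ → ℝ := fun y => (1 + y) ^ δ - (1 - y) ^ δ - 2 * δ * y
  have hd : ∀ z : ℝ, 0 ≤ z → z < 1 →
      HasDerivAt ψ (δ * (1 + z) ^ (δ - 1) + δ * (1 - z) ^ (δ - 1) - 2 * δ) z := by
    intro z hz0 hz1
    have e1 : HasDerivAt (fun y : ℝ => 1 + y) 1 z := (hasDerivAt_id z).const_add 1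
    have e2 : HasDerivAt (fun y : ℝ => 1 - y) (-1) z := (hasDerivAt_id z).const_sub 1
    have d1 := e1.rpow_const (p := δ) (Or.inl (by linarith : (1 + z) ≠ 0))
    have d2 := e2.rpow_const (p := δ) (Or.inl (by linarith : (1 - z) ≠ 0))
    have d3 := ((d1.sub d2).sub ((hasDerivAt_id z).const_mul (2 * δ)))
    refine d3.congr_deriv ?_
    ring
  have hm : MonotoneOn ψ (Set.Ico 0 1) := by
    apply monotoneOn_of_deriv_nonneg (convex_Ico 0 1)
    · intro z hz
      exact (hd z hz.1 hz.2).continuousAt.continuousWithinAt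
    · intro z hz
      rw [interior_Ico] at hz
      exact (hd z hz.1.le hz.2).differentiableAt.differentiableWithinAt
    · intro z hz
      rw [interior_Ico] at hz
      rw [(hd z hz.1.le hz.2).deriv]
      have p1 : 0 < (1 + z) ^ (δ - 1) := Real.rpow_pos_of_pos (by linarith [hz.1]) _
      have p2 : 0 < (1 - z) ^ (δ - 1) := Real.rpow_pos_of_pos (by linarith [hz.2]) _
      have p3 : 1 ≤ (1 + z) ^ (δ - 1) * (1 - z) ^ (δ - 1) := by
        rw [← Real.mul_rpow (by linarith [hz.1]) (by linarith [hz.2])]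
        apply Real.one_le_rpow_of_pos_of_le_one_of_nonpos
        · nlinarith [hz.1, hz.2]
        · nlinarith [hz.1, hz.2]
        · linarith
      have : 2 ≤ (1 + z) ^ (δ - 1) + (1 - z) ^ (δ - 1) := by
        nlinarith [sq_nonneg ((1 + z) ^ (δ - 1) - (1 - z) ^ (δ - 1))]
      nlinarith
  have := hm (Set.mem_Ico.2 ⟨le_refl 0, one_pos⟩) (Set.mem_Ico.2 ⟨hy0, hy1⟩) hy0
  simp only [ψ] at this
  norm_num at this
  linarith

theorem aux_phi (δ : ℝ) (h0 : 0 < δ) (h1 : δ ≤ 1) (y : ℝ) (hy0 : 0 ≤ y) (hy1 : y ≤ 1) :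
    1 + (1 + δ) / 2 * (δ * y ^ 2) ≤ ((1 + y) ^ (1 + δ) + (1 - y) ^ (1 + δ)) / 2 := by
  let φ : ℝ → ℝ := fun y => (1 + y) ^ (1 + δ) + (1 - y) ^ (1 + δ) - (1 + δ) * δ * y ^ 2
  have hd : ∀ z : ℝ, HasDerivAt φ
      ((1 + δ) * ((1 + z) ^ δ - (1 - z) ^ δ - 2 * δ * z)) z := by
    intro z
    have e1 : HasDerivAt (fun y : ℝ => 1 + y) 1 z := (hasDerivAt_id z).const_add 1
    have e2 : HasDerivAt (fun y : ℝ => 1 - y) (-1) z := (hasDerivAt_id z).const_sub 1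
    have d1 := e1.rpow_const (p := 1 + δ) (Or.inr (by linarith))
    have d2 := e2.rpow_const (p := 1 + δ) (Or.inr (by linarith))
    have d3 := ((d1.add d2).sub (((hasDerivAt_id z).pow 2).const_mul ((1 + δ) * δ)))
    refine d3.congr_deriv ?_
    have : 1 + δ - 1 = δ := by ring
    rw [this]
    simp
    ring
  have hm : MonotoneOn φ (Set.Icc 0 1) := by
    apply monotoneOn_of_deriv_nonneg (convex_Icc 0 1)
    · intro z hz
      exact (hd z).continuousAt.continuousWithinAt
    · intro z hz
      exact (hd z).differentiableAt.differentiableWithinAt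
    · intro z hz
      rw [interior_Icc] at hz
      rw [(hd z).deriv]
      have := aux_psi δ h0 h1 z hz.1.le hz.2
      apply mul_nonneg <;> linarith
  have := hm (Set.mem_Icc.2 ⟨le_refl 0, zero_le_one⟩) (Set.mem_Icc.2 ⟨hy0, hy1⟩) hy0
  simp only [φ] at this
  norm_num at this
  linarith

theorem two_point_aux (δ : ℝ) (h0 : 0 < δ) (h1 : δ ≤ 1) (a b : ℝ) (hb : 0 ≤ b) (hab : b ≤ a) :
    ((a + b) / 2) ^ 2 + δ * ((a - b) / 2) ^ 2
      ≤ ((a ^ (1 + δ) + b ^ (1 + δ)) / 2) ^ (2 / (1 + δ)) := by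
  have ha : 0 ≤ a := hb.trans hab
  have hp : 0 < 1 + δ := by linarith
  rcases (add_nonneg ha hb).eq_or_lt with h | h
  · have e1 : a = 0 := by linarith
    have e2 : b = 0 := by linarith
    subst e1; subst e2
    simp only [add_zero, zero_div, sub_zero]
    norm_num
    positivity
  set x := (a + b) / 2 with hx
  have hx0 : 0 < x := by rw [hx]; linarith
  set y := (a - b) / 2 / x with hy
  have hyx : (a - b) / 2 = x * y := by rw [hy]; field_simp
  have hy0 : 0 ≤ y := by rw [hy]; apply div_nonneg <;> linarith
  have hy1 : y ≤ 1 := by rw [hy, div_le_one hx0, hx]; linarith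
  have ea : a = x * (1 + y) := by linarith
  have eb : b = x * (1 - y) := by linarith
  have key := aux_phi δ h0 h1 y hy0 hy1
  have hB : 1 + δ * y ^ 2 ≤ (1 + (1 + δ) / 2 * (δ * y ^ 2)) ^ (2 / (1 + δ)) := by
    have := one_add_mul_self_le_rpow_one_add (s := (1 + δ) / 2 * (δ * y ^ 2)) (p := 2 / (1 + δ))
      (by have : 0 ≤ (1 + δ) / 2 * (δ * y ^ 2) := by positivity
          linarith) (by rw [le_div_iff₀ hp]; linarith)
    refine le_trans (le_of_eq ?_) this
    field_simp
  rw [hyx]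
  have e3 : (a ^ (1 + δ) + b ^ (1 + δ)) / 2
      = x ^ (1 + δ) * (((1 + y) ^ (1 + δ) + (1 - y) ^ (1 + δ)) / 2) := by
    rw [ea, eb, Real.mul_rpow hx0.le (by linarith), Real.mul_rpow hx0.le (by linarith)]
    ring
  have hpos : 0 ≤ 1 + (1 + δ) / 2 * (δ * y ^ 2) := by positivity
  rw [e3, Real.mul_rpow (by positivity) (hpos.trans key), ← Real.rpow_mul hx0.le]
  have e4 : (1 + δ) * (2 / (1 + δ)) = 2 := by field_simp
  rw [e4, Real.rpow_two]
  have : 1 + δ * y ^ 2 ≤ (((1 + y) ^ (1 + δ) + (1 - y) ^ (1 + δ)) / 2) ^ (2 / (1 + δ)) :=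
    hB.trans (Real.rpow_le_rpow hpos key (by positivity))
  nlinarith [sq_nonneg x, mul_le_mul_of_nonneg_left this (sq_nonneg x)]

theorem two_point (δ : ℝ) (h0 : 0 < δ) (h1 : δ ≤ 1) (a b : ℝ) (ha : 0 ≤ a) (hb : 0 ≤ b) :
    ((a + b) / 2) ^ 2 + δ * ((a - b) / 2) ^ 2
      ≤ ((a ^ (1 + δ) + b ^ (1 + δ)) / 2) ^ (2 / (1 + δ)) := by
  rcases le_total b a with h | h
  · exact two_point_aux δ h0 h1 a b hb h
  · have := two_point_aux δ h0 h1 b a ha h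
    rw [add_comm (b ^ (1 + δ))] at this
    refine le_trans (le_of_eq ?_) this
    ring

theorem sum_cons_split {n : ℕ} (F : (Fin (n + 1) → ZMod 2) → ℝ) :
    ∑ x, F x = ∑ x : Fin n → ZMod 2, F (Fin.cons 0 x) + ∑ x : Fin n → ZMod 2, F (Fin.cons 1 x) := by
  rw [← (Fin.consEquiv (fun _ : Fin (n + 1) => ZMod 2)).sum_comp, Fintype.sum_prod_type]
  exact Fin.sum_univ_two (fun a : Fin 2 => ∑ x : Fin n → ZMod 2,
    F (Fin.cons (α := fun _ => ZMod 2) (a : ZMod 2) x))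

theorem wt_cons_zero {n : ℕ} (v : Fin n → ZMod 2) :
    (univ.filter (fun i => (Fin.cons 0 v : Fin (n + 1) → ZMod 2) i ≠ 0)).card
      = (univ.filter (fun i => v i ≠ 0)).card := by
  simp only [Finset.card_filter, Fin.sum_univ_succ, Fin.cons_zero, Fin.cons_succ]
  simp

theorem wt_cons_one {n : ℕ} (v : Fin n → ZMod 2) :
    (univ.filter (fun i => (Fin.cons 1 v : Fin (n + 1) → ZMod 2) i ≠ 0)).card
      = (univ.filter (fun i => v i ≠ 0)).card + 1 := by
  simp only [Finset.card_filter, Fin.sum_univ_succ, Fin.cons_zero, Fin.cons_succ]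
  simp [add_comm]

theorem fourier_cons_zero {n : ℕ} (f : (Fin (n + 1) → ZMod 2) → ℝ) (v : Fin n → ZMod 2) :
    booleanFourier f (Fin.cons 0 v) =
      (booleanFourier (fun x => f (Fin.cons 0 x)) v
        + booleanFourier (fun x => f (Fin.cons 1 x)) v) / 2 := by
  unfold booleanFourier
  rw [sum_cons_split]
  simp only [Fin.sum_univ_succ, Fin.cons_zero, Fin.cons_succ, ZMod.val_zero, mul_zero, zero_add]
  rw [pow_succ]
  field_simp

theorem fourier_cons_one {n : ℕ} (f : (Fin (n + 1) → ZMod 2) → ℝ) (v : Fin n → ZMod 2) :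
    booleanFourier f (Fin.cons 1 v) =
      (booleanFourier (fun x => f (Fin.cons 0 x)) v
        - booleanFourier (fun x => f (Fin.cons 1 x)) v) / 2 := by
  unfold booleanFourier
  rw [sum_cons_split]
  have h1 : (1 : ZMod 2).val = 1 := rfl
  simp only [Fin.sum_univ_succ, Fin.cons_zero, Fin.cons_succ, ZMod.val_zero, zero_mul, zero_add,
    h1, mul_one, pow_add, pow_one, neg_mul, one_mul, mul_neg, Finset.sum_neg_distrib]
  field_simp
  ring

theorem hyper (δ : ℝ) (h0 : 0 < δ) (h1 : δ ≤ 1) (n : ℕ) (f : (Fin n → ZMod 2) → ℝ)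
    (hf : ∀ x, 0 ≤ f x) :
    ∑ v : Fin n → ZMod 2, δ ^ (univ.filter (fun i => v i ≠ 0)).card * booleanFourier f v ^ 2
      ≤ (((2 : ℝ) ^ n)⁻¹ * ∑ x, f x ^ (1 + δ)) ^ (2 / (1 + δ)) := by
  have hp : 0 < 1 + δ := by linarith
  have e4 : (1 + δ) * (2 / (1 + δ)) = 2 := by field_simp
  induction n with
  | zero =>
    simp only [booleanFourier, Fintype.sum_unique, pow_zero, inv_one, one_mul]
    rw [← Real.rpow_mul (hf _), e4]
    simp
  | succ n ih =>
    set f0 : (Fin n → ZMod 2) → ℝ := fun x => f (Fin.cons 0 x) with hf0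
    set f1 : (Fin n → ZMod 2) → ℝ := fun x => f (Fin.cons 1 x) with hf1
    have i0 := ih f0 (fun x => hf _)
    have i1 := ih f1 (fun x => hf _)
    rw [sum_cons_split, sum_cons_split (fun x => f x ^ (1 + δ))]
    simp only [wt_cons_zero, wt_cons_one, fourier_cons_zero, fourier_cons_one]
    set w : (Fin n → ZMod 2) → ℝ := fun v => δ ^ (univ.filter (fun i => v i ≠ 0)).card with hw
    have hw0 : ∀ v, 0 ≤ w v := fun v => pow_nonneg h0.le _
    set S0 := ∑ v, w v * booleanFourier f0 v ^ 2 with hS0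
    set S1 := ∑ v, w v * booleanFourier f1 v ^ 2 with hS1
    set C := ∑ v, w v * (booleanFourier f0 v * booleanFourier f1 v) with hC
    set M0 := ((2 : ℝ) ^ n)⁻¹ * ∑ x, f0 x ^ (1 + δ) with hM0
    set M1 := ((2 : ℝ) ^ n)⁻¹ * ∑ x, f1 x ^ (1 + δ) with hM1
    have m0 : 0 ≤ M0 := mul_nonneg (by positivity)
      (Finset.sum_nonneg fun x _ => Real.rpow_nonneg (hf _) _)
    have m1 : 0 ≤ M1 := mul_nonneg (by positivity)
      (Finset.sum_nonneg fun x _ => Real.rpow_nonneg (hf _) _)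
    have s0 : 0 ≤ S0 := Finset.sum_nonneg fun v _ => mul_nonneg (hw0 v) (sq_nonneg _)
    have s1 : 0 ≤ S1 := Finset.sum_nonneg fun v _ => mul_nonneg (hw0 v) (sq_nonneg _)
    have hCS : C ^ 2 ≤ S0 * S1 := by
      apply Finset.sum_sq_le_sum_mul_sum_of_sq_le_mul
      · exact fun v _ => mul_nonneg (hw0 v) (sq_nonneg _)
      · exact fun v _ => mul_nonneg (hw0 v) (sq_nonneg _)
      · intro v _; exact le_of_eq (by ring)
    set a := M0 ^ (1 / (1 + δ)) with ha
    set b := M1 ^ (1 / (1 + δ)) with hb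
    have a0 : 0 ≤ a := Real.rpow_nonneg m0 _
    have b0 : 0 ≤ b := Real.rpow_nonneg m1 _
    have sqr : ∀ M : ℝ, 0 ≤ M → M ^ (2 / (1 + δ)) = (M ^ (1 / (1 + δ))) ^ 2 := by
      intro M hM
      rw [← Real.rpow_natCast, ← Real.rpow_mul hM]
      congr 1
      push_cast
      ring
    have pw : ∀ M : ℝ, 0 ≤ M → (M ^ (1 / (1 + δ))) ^ (1 + δ) = M := by
      intro M hM
      rw [← Real.rpow_mul hM]
      have : 1 / (1 + δ) * (1 + δ) = 1 := by field_simp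
      rw [this, Real.rpow_one]
    have j0 : S0 ≤ a ^ 2 := by rw [ha, ← sqr _ m0]; exact i0
    have j1 : S1 ≤ b ^ 2 := by rw [hb, ← sqr _ m1]; exact i1
    have hCab : C ≤ a * b := by
      refine le_of_abs_le (abs_le_of_sq_le_sq ?_ (mul_nonneg a0 b0))
      calc C ^ 2 ≤ S0 * S1 := hCS
        _ ≤ a ^ 2 * b ^ 2 := mul_le_mul j0 j1 s1 (sq_nonneg _)
        _ = (a * b) ^ 2 := by ring
    have tp := two_point δ h0 h1 a b a0 b0
    rw [ha, hb, pw _ m0, pw _ m1, ← ha, ← hb] at tp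
    have eR : ((2 : ℝ) ^ (n + 1))⁻¹ * (∑ x : Fin n → ZMod 2, f (Fin.cons 0 x) ^ (1 + δ)
        + ∑ x : Fin n → ZMod 2, f (Fin.cons 1 x) ^ (1 + δ)) = (M0 + M1) / 2 := by
      rw [hM0, hM1, pow_succ]
      field_simp
      rfl
    rw [eR]
    refine le_trans ?_ tp
    have eL : (∑ v : Fin n → ZMod 2, δ ^ (univ.filter (fun i => v i ≠ 0)).card *
          ((booleanFourier f0 v + booleanFourier f1 v) / 2) ^ 2 +
        ∑ v : Fin n → ZMod 2, δ ^ ((univ.filter (fun i => v i ≠ 0)).card + 1) *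
          ((booleanFourier f0 v - booleanFourier f1 v) / 2) ^ 2)
        = (1 + δ) / 4 * (S0 + S1) + (1 - δ) / 2 * C := by
      rw [hS0, hS1, hC, ← Finset.sum_add_distrib, ← Finset.sum_add_distrib, Finset.mul_sum,
        Finset.mul_sum, ← Finset.sum_add_distrib]
      apply Finset.sum_congr rfl
      intro v _
      simp only [hw, pow_succ]
      ring
    rw [eL]
    have k1 := mul_le_mul_of_nonneg_left (add_le_add j0 j1) (by linarith : 0 ≤ (1 + δ) / 4)
    have k2 := mul_le_mul_of_nonneg_left hCab (by linarith : 0 ≤ (1 - δ) / 2)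
    nlinarith

/-- for `c' > 0` real, `A ⊆ {0,1}^n` with `|A| ≥ 2^{n−c'}` and indicator `f`,
and every integer `ℓ` with `1 ≤ ℓ ≤ 4c'`:
`(2^{2n}/|A|²) ∑_{wt(v)=ℓ} f̂(v)² ≤ (4√2·c'/ℓ)^ℓ`. -/
theorem stmt6 (n : ℕ) (c' : ℝ) (hc' : 0 < c')
    (A : Finset (Fin n → ZMod 2)) (hA : (2 : ℝ) ^ ((n : ℝ) - c') ≤ (A.card : ℝ))
    (ℓ : ℕ) (hℓ1 : 1 ≤ ℓ) (hℓ2 : (ℓ : ℝ) ≤ 4 * c') :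
    (2 : ℝ) ^ (2 * n) / (A.card : ℝ) ^ 2 *
        ∑ v ∈ univ.filter
            (fun v : Fin n → ZMod 2 => (univ.filter (fun i => v i ≠ 0)).card = ℓ),
          booleanFourier (fun x : Fin n → ZMod 2 => if x ∈ A then (1 : ℝ) else 0) v ^ 2
      ≤ (4 * Real.sqrt 2 * c' / (ℓ : ℝ)) ^ ℓ := by
  have hl : (0 : ℝ) < ℓ := by exact_mod_cast hℓ1
  set δ : ℝ := ℓ / (4 * c') with hδ
  have h0 : 0 < δ := by positivity
  have h1 : δ ≤ 1 := by rw [hδ, div_le_one (by positivity)]; exact hℓ2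
  set f : (Fin n → ZMod 2) → ℝ := fun x => if x ∈ A then (1 : ℝ) else 0 with hf
  have hp : 0 < 1 + δ := by linarith
  have H := hyper δ h0 h1 n f (fun x => by simp only [hf]; split_ifs <;> norm_num)
  have hs : ∑ x, f x ^ (1 + δ) = A.card := by
    have : ∀ x, f x ^ (1 + δ) = if x ∈ A then (1 : ℝ) else 0 := by
      intro x
      simp only [hf]
      split_ifs
      · simp
      · exact Real.zero_rpow hp.ne'
    simp [this]
  rw [hs] at H
  set μ : ℝ := ((2 : ℝ) ^ n)⁻¹ * A.card with hμ
  have hμc : (2 : ℝ) ^ (-c') ≤ μ := by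
    rw [hμ, inv_mul_eq_div, le_div_iff₀ (by positivity), ← Real.rpow_natCast,
      ← Real.rpow_add two_pos]
    refine le_trans (le_of_eq ?_) hA
    congr 1
    ring
  have hμ0 : 0 < μ := lt_of_lt_of_le (by positivity) hμc
  set W := ∑ v ∈ univ.filter
            (fun v : Fin n → ZMod 2 => (univ.filter (fun i => v i ≠ 0)).card = ℓ),
          booleanFourier f v ^ 2 with hW
  have hWS : δ ^ ℓ * W ≤ μ ^ (2 / (1 + δ)) := by
    refine le_trans ?_ H
    rw [hW, Finset.mul_sum]
    refine le_trans (le_of_eq ?_) (Finset.sum_le_sum_of_subset_of_nonneg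
      (Finset.filter_subset (fun v : Fin n → ZMod 2 =>
        (univ.filter (fun i => v i ≠ 0)).card = ℓ) univ) ?_)
    · apply Finset.sum_congr rfl
      intro v hv
      rw [(Finset.mem_filter.1 hv).2]
    · intro v _ _
      positivity
  have eL : (2 : ℝ) ^ (2 * n) / (A.card : ℝ) ^ 2 = (μ ^ 2)⁻¹ := by
    rw [hμ, mul_pow, mul_inv, inv_pow, inv_inv, ← pow_mul, mul_comm n 2, div_eq_mul_inv]
  have hexp : μ ^ (2 / (1 + δ)) ≤ μ ^ 2 * Real.sqrt 2 ^ ℓ := by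
    have e : 2 / (1 + δ) = 2 + -(2 * δ / (1 + δ)) := by field_simp; ring
    rw [e, Real.rpow_add hμ0, Real.rpow_two]
    apply mul_le_mul_of_nonneg_left _ (sq_nonneg _)
    calc μ ^ (-(2 * δ / (1 + δ))) ≤ ((2 : ℝ) ^ (-c')) ^ (-(2 * δ / (1 + δ))) :=
          Real.rpow_le_rpow_of_nonpos (by positivity) hμc (by
            rw [neg_nonpos]; positivity)
      _ = (2 : ℝ) ^ (c' * (2 * δ / (1 + δ))) := by
          rw [← Real.rpow_mul two_pos.le]; congr 1; ring
      _ ≤ (2 : ℝ) ^ ((1 / 2 : ℝ) * ℓ) := by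
          apply Real.rpow_le_rpow_of_exponent_le one_le_two
          have : (1 / 2 : ℝ) * ℓ = c' * (2 * δ) := by rw [hδ]; field_simp; ring
          rw [this]
          apply mul_le_mul_of_nonneg_left _ hc'.le
          apply div_le_self <;> linarith
      _ = Real.sqrt 2 ^ ℓ := by
          rw [Real.rpow_mul two_pos.le, Real.sqrt_eq_rpow, Real.rpow_natCast]
  have eR : 4 * Real.sqrt 2 * c' / (ℓ : ℝ) = Real.sqrt 2 / δ := by
    rw [hδ]; field_simp
  rw [eL, eR, div_pow, le_div_iff₀ (by positivity), inv_mul_eq_div, div_mul_eq_mul_div,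
    div_le_iff₀ (by positivity)]
  nlinarith [hWS.trans hexp]
end

section
/- There exist absolute constants C > 0 and γ₀ ∈ (0,1) such that the following holds. Let γ ∈ (n^{-1/10}, γ₀) and α ∈ (n^{-1/10}, 1/16) with α smaller than an absolute constant, let c' ≤ γ√n + log₂(2/γ), and let A ⊆ {0,1}^n have size |A| ≥ 2^{n−c'}. Let G be sampled from the Erdős–Rényi distribution G(n, α/n), let r be its number of edges and M ∈ {0,1}^{r×n} its edge incidence matrix over GF(2), define p_M(z) = |{x ∈ A : Mx = z}|/|A| for z ∈ {0,1}^r, and let U_r denote the uniform distribution on {0,1}^r. Then E_G[ ‖p_M − U_r‖²_tvd ] ≤ C·(γ² + α³). -/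
open Finset

/-- The GF(2) sum `x u + x v` of the values of `x` on the two endpoints of an edge; this is
the entry of `Mx` corresponding to that edge, for `M` the edge incidence matrix. -/
def edgeParity {n : ℕ} (x : Fin n → ZMod 2) : Sym2 (Fin n) → ZMod 2 :=
  Sym2.lift ⟨fun u v => x u + x v, fun _ _ => add_comm _ _⟩

/-! ### Signs and hypercontractivity -/

/-- sign of an element of `ZMod 2` -/
noncomputable def sg (a : ZMod 2) : ℝ := if a = 0 then 1 else -1

lemma sg_add (a b : ZMod 2) : sg (a + b) = sg a * sg b := by
  have h : ∀ a b : ZMod 2, (a + b = 0 ↔ ((a = 0 ∧ b = 0) ∨ (a ≠ 0 ∧ b ≠ 0))) := by decide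
  have := h a b
  unfold sg
  by_cases ha : a = 0 <;> by_cases hb : b = 0 <;> simp [ha, hb, this] 

lemma sg_cases (a : ZMod 2) : sg a = 1 ∨ sg a = -1 := by
  unfold sg; split_ifs <;> simp

lemma sg_sq (a : ZMod 2) : sg a * sg a = 1 := by
  rcases sg_cases a with h | h <;> simp [h]

lemma one_add_sg (a b : ZMod 2) : 1 + sg a * sg b = if a = b then 2 else 0 := by
  have h : ∀ a b : ZMod 2, (a = b ↔ ((a = 0 ∧ b = 0) ∨ (a ≠ 0 ∧ b ≠ 0))) := by decide
  have := h a b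
  unfold sg
  by_cases ha : a = 0 <;> by_cases hb : b = 0 <;> simp [ha, hb, this, eq_comm] <;> norm_num

lemma choose_bound (m j : ℕ) (hm : 1 ≤ m) :
    (Nat.choose (2 * m) (2 * j) : ℝ) ≤ Nat.choose m j * (2 * m - 1 : ℝ) ^ j := by
  induction j with
  | zero => simp
  | succ j ih =>
    have hm1 : (1:ℝ) ≤ m := by exact_mod_cast hm
    by_cases hj : m ≤ j
    · rw [Nat.choose_eq_zero_of_lt (by omega : 2 * m < 2 * (j+1))]
      have : (0:ℝ) ≤ 2 * m - 1 := by linarith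
      simp only [Nat.cast_zero]; positivity
    · push Not at hj
      obtain ⟨d, rfl⟩ : ∃ d, m = j + 1 + d := ⟨m - (j+1), by omega⟩
      have e1 := Nat.choose_succ_right_eq (2 * (j+1+d)) (2*j)
      have e2 := Nat.choose_succ_right_eq (2 * (j+1+d)) (2*j+1)
      have e3 := Nat.choose_succ_right_eq (j+1+d) j
      rw [show 2 * (j+1+d) - 2*j = 2*d+2 by omega] at e1
      rw [show 2 * (j+1+d) - (2*j+1) = 2*d+1 by omega] at e2
      rw [show (j+1+d) - j = d+1 by omega] at e3
      have e1' : (Nat.choose (2 * (j+1+d)) (2*j+1) : ℝ) * (2*j+1) = Nat.choose (2 * (j+1+d)) (2*j) * (2*d+2) := by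
        exact_mod_cast e1
      have e2' : (Nat.choose (2 * (j+1+d)) (2*(j+1)) : ℝ) * (2*j+2) = Nat.choose (2 * (j+1+d)) (2*j+1) * (2*d+1) := by
        exact_mod_cast e2
      have e3' : (Nat.choose (j+1+d) (j+1) : ℝ) * (j+1) = Nat.choose (j+1+d) j * (d+1) := by
        exact_mod_cast e3
      have e4 : (Nat.choose (2 * (j+1+d)) (2*(j+1)) : ℝ) * ((2*j+1) * (j+1)) =
          Nat.choose (2 * (j+1+d)) (2*j) * ((d+1) * (2*d+1)) := by
        linear_combination (2 * j + 1) / 2 * e2' + (2*d+1)/2 * e1'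
      set K : ℝ := 2 * ((j+1+d : ℕ) : ℝ) - 1 with hK
      have hKv : K = 2*j+1+2*d := by rw [hK]; push_cast; ring
      have hK0 : 0 ≤ K := by rw [hKv]; positivity
      have hpos : (0:ℝ) < (2*j+1) * (j+1) := by positivity
      refine le_of_mul_le_mul_right ?_ hpos
      rw [e4]
      calc (Nat.choose (2 * (j+1+d)) (2*j) : ℝ) * ((d+1) * (2*d+1))
          ≤ (Nat.choose (j+1+d) j * K ^ j) * ((d+1) * (2*d+1)) := by gcongr
        _ = (Nat.choose (j+1+d) j * (d+1)) * K^j * (2*d+1) := by ring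
        _ = (Nat.choose (j+1+d) (j+1) * (j+1)) * K^j * (2*d+1) := by rw [e3']
        _ ≤ (Nat.choose (j+1+d) (j+1) * (j+1)) * K^j * (K * (2*j+1)) := by
            gcongr
            rw [hKv]; nlinarith [Nat.cast_nonneg (α := ℝ) j, Nat.cast_nonneg (α := ℝ) d, mul_nonneg (Nat.cast_nonneg (α := ℝ) j) (Nat.cast_nonneg (α := ℝ) d)]
        _ = _ := by ring

lemma sum_even (f : ℕ → ℝ) (m : ℕ) (hf : ∀ j, f (2 * j + 1) = 0) :
    ∑ k ∈ range (2 * m + 1), f k = ∑ j ∈ range (m + 1), f (2 * j) := by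
  induction m with
  | zero => simp
  | succ m ih =>
    rw [show 2 * (m+1) + 1 = (2*m+1) + 1 + 1 by ring, sum_range_succ, sum_range_succ, ih,
      sum_range_succ _ (m+1), hf]
    simp [mul_add]

lemma two_point_s7 (m : ℕ) (hm : 1 ≤ m) (ρ a b : ℝ) (hρ : ρ ^ 2 * (2 * m - 1) ≤ 1) :
    ((a + ρ * b) ^ (2 * m) + (a - ρ * b) ^ (2 * m)) / 2 ≤ (a ^ 2 + b ^ 2) ^ m := by
  have hm1 : (1:ℝ) ≤ m := by exact_mod_cast hm
  have e1 : ((a + ρ * b) ^ (2 * m) + (a - ρ * b) ^ (2 * m)) / 2 =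
      ∑ k ∈ range (2 * m + 1),
        ((ρ * b) ^ k * a ^ (2 * m - k) * (Nat.choose (2*m) k) * ((1 + (-1) ^ k) / 2)) := by
    rw [add_comm a, sub_eq_neg_add, add_pow, add_pow, ← sum_add_distrib, sum_div]
    refine sum_congr rfl fun k _ => ?_
    rw [neg_pow (ρ * b)]; ring
  rw [e1, sum_even _ _ (fun j => by simp [pow_succ, pow_mul]), add_comm (a^2), add_pow]
  refine sum_le_sum fun j hj => ?_
  have hj' : j ≤ m := by simpa [Nat.lt_succ_iff] using hj
  have e2 : ((1:ℝ) + (-1) ^ (2 * j)) / 2 = 1 := by simp [pow_mul]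
  rw [e2, mul_one, show 2 * m - 2 * j = 2 * (m - j) by omega, pow_mul, pow_mul, mul_pow, mul_pow]
  have hK0 : (0:ℝ) ≤ 2 * m - 1 := by linarith
  have h1 : (ρ ^ 2) ^ j * (Nat.choose (2*m) (2*j)) ≤ Nat.choose m j := by
    calc (ρ ^ 2) ^ j * (Nat.choose (2*m) (2*j)) 
        ≤ (ρ ^ 2) ^ j * (Nat.choose m j * (2 * m - 1 : ℝ) ^ j) := by
          gcongr; exact choose_bound m j hm
      _ = (ρ ^ 2 * (2 * m - 1)) ^ j * Nat.choose m j := by rw [mul_pow]; ring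
      _ ≤ 1 * Nat.choose m j := by
          gcongr
          exact pow_le_one₀ (by positivity) hρ
      _ = _ := one_mul _
  calc (ρ ^ 2) ^ j * (b ^ 2) ^ j * (a ^ 2) ^ (m - j) * (Nat.choose (2*m) (2*j))
      = ((b ^ 2) ^ j * (a ^ 2) ^ (m - j)) * ((ρ ^ 2) ^ j * (Nat.choose (2*m) (2*j))) := by ring
    _ ≤ ((b ^ 2) ^ j * (a ^ 2) ^ (m - j)) * Nat.choose m j := by gcongr
    _ = _ := by ring

lemma minkowski {ι : Type*} (s : Finset ι) (m : ℕ) (hm : 1 ≤ m) (G H : ι → ℝ) (N P Q : ℝ)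
    (hP : 0 ≤ P) (hQ : 0 ≤ Q) (hG : ∑ x ∈ s, G x ^ (2 * m) ≤ N * P ^ m)
    (hH : ∑ x ∈ s, H x ^ (2 * m) ≤ N * Q ^ m) :
    ∑ x ∈ s, (G x ^ 2 + H x ^ 2) ^ m ≤ N * (P + Q) ^ m := by
  have key : ∀ G : ι → ℝ, ∑ x ∈ s, G x ^ (2 * m) ≤ N * 0 ^ m → ∀ x ∈ s, G x = 0 := by
    intro G hG x hx
    rw [zero_pow (by omega), mul_zero] at hG
    have h0 : ∀ x ∈ s, 0 ≤ G x ^ (2*m) := fun x _ => by rw [pow_mul]; positivity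
    have := (sum_eq_zero_iff_of_nonneg h0).1 (le_antisymm hG (sum_nonneg h0)) x hx
    exact pow_eq_zero_iff (by omega) |>.1 this
  rcases hP.eq_or_lt with rfl | hP
  · have := key G hG
    calc _ = ∑ x ∈ s, H x ^ (2 * m) := sum_congr rfl fun x hx => by
            rw [this x hx, pow_mul]; simp
      _ ≤ _ := by simpa using hH
  rcases hQ.eq_or_lt with rfl | hQ
  · have := key H hH
    calc _ = ∑ x ∈ s, G x ^ (2 * m) := sum_congr rfl fun x hx => by
            rw [this x hx, pow_mul]; simp
      _ ≤ _ := by simpa using hG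
  have hPQ : 0 < P + Q := by positivity
  have hpt : ∀ x, (G x ^ 2 + H x ^ 2) ^ m ≤
      (P + Q) ^ m * (P / (P + Q) * (G x ^ (2 * m) / P ^ m) + Q / (P + Q) * (H x ^ (2*m) / Q ^ m)) := by
    intro x
    have h1 : 0 ≤ G x ^ 2 / P := by positivity
    have h2 : 0 ≤ H x ^ 2 / Q := by positivity
    have h3 : 0 ≤ P / (P + Q) := by positivity
    have h4 : 0 ≤ Q / (P + Q) := by positivity
    have h5 : P / (P + Q) + Q / (P + Q) = 1 := by field_simp
    have hc := (convexOn_pow (𝕜 := ℝ) m).2 (Set.mem_Ici.2 h1) (Set.mem_Ici.2 h2) h3 h4 h5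
    simp only [smul_eq_mul] at hc
    have e : G x ^ 2 + H x ^ 2 = (P + Q) * (P / (P + Q) * (G x ^ 2 / P) + Q / (P + Q) * (H x ^ 2 / Q)) := by
      field_simp
    rw [e, mul_pow, pow_mul, pow_mul, ← div_pow, ← div_pow]
    gcongr
  calc _ ≤ ∑ x ∈ s, (P + Q) ^ m * (P / (P + Q) * (G x ^ (2 * m) / P ^ m) + Q / (P + Q) * (H x ^ (2*m) / Q ^ m)) :=
        sum_le_sum fun x _ => hpt x
    _ = (P + Q) ^ m * (P / (P + Q) * ((∑ x ∈ s, G x ^ (2 * m)) / P ^ m) + Q / (P + Q) * ((∑ x ∈ s, H x ^ (2*m)) / Q ^ m)) := by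
        rw [← mul_sum, sum_add_distrib, ← mul_sum, ← mul_sum, sum_div, sum_div]
    _ ≤ (P + Q) ^ m * (P / (P + Q) * ((N * P ^ m) / P ^ m) + Q / (P + Q) * ((N * Q ^ m) / Q ^ m)) := by gcongr
    _ = _ := by field_simp

/-- characters -/
noncomputable def chi {n : ℕ} (v : Finset (Fin n)) (x : Fin n → ZMod 2) : ℝ := ∏ i ∈ v, sg (x i)

lemma sum_flip {n : ℕ} (i : Fin n) (f : (Fin n → ZMod 2) → ℝ) :
    ∑ x, f x = ∑ x, (f x + f (x + Pi.single i 1)) / 2 := by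
  have : ∑ x, f (x + Pi.single i 1) = ∑ x, f x :=
    Fintype.sum_equiv (Equiv.addRight (Pi.single i 1)) _ _ (fun x => rfl)
  rw [← sum_div, sum_add_distrib, this]; ring

lemma sg_one : sg 1 = -1 := by simp [sg]

lemma chi_flip {n : ℕ} (i : Fin n) (v : Finset (Fin n)) (hi : i ∉ v) (x : Fin n → ZMod 2) :
    chi v (x + Pi.single i 1) = chi v x := by
  unfold chi
  refine prod_congr rfl fun j hj => ?_
  have : j ≠ i := fun h => hi (h ▸ hj)
  simp [this]

lemma hypercontractive {n : ℕ} (m : ℕ) (hm : 1 ≤ m) (ρ : ℝ) (hρ : ρ ^ 2 * (2 * m - 1) ≤ 1)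
    (s : Finset (Fin n)) : ∀ a : Finset (Fin n) → ℝ,
    ∑ x : Fin n → ZMod 2, (∑ v ∈ s.powerset, ρ ^ v.card * a v * chi v x) ^ (2 * m) ≤
      2 ^ n * (∑ v ∈ s.powerset, a v ^ 2) ^ m := by
  induction s using Finset.induction_on with
  | empty =>
    intro a
    simp [chi, pow_mul, ZMod.card]
  | insert i s hi ih =>
    intro a
    set G : (Fin n → ZMod 2) → ℝ := fun x => ∑ v ∈ s.powerset, ρ ^ v.card * a v * chi v x with hG
    set H : (Fin n → ZMod 2) → ℝ := fun x => ∑ v ∈ s.powerset, ρ ^ v.card * a (insert i v) * chi v x with hH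
    have hnot : ∀ v ∈ s.powerset, i ∉ v := fun v hv h => hi (mem_powerset.1 hv h)
    have hGf : ∀ x, G (x + Pi.single i 1) = G x := fun x => by
      simp only [hG]; exact sum_congr rfl fun v hv => by rw [chi_flip i v (hnot v hv)]
    have hHf : ∀ x, H (x + Pi.single i 1) = H x := fun x => by
      simp only [hH]; exact sum_congr rfl fun v hv => by rw [chi_flip i v (hnot v hv)]
    have e : ∀ x, ∑ v ∈ (insert i s).powerset, ρ ^ v.card * a v * chi v x = G x + ρ * (sg (x i) * H x) := by
      intro x
      rw [sum_powerset_insert hi]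
      simp only [hG, hH, mul_sum]
      congr 1
      refine sum_congr rfl fun v hv => ?_
      rw [card_insert_of_notMem (hnot v hv)]
      unfold chi
      rw [prod_insert (hnot v hv)]; ring
    simp only [e]
    rw [sum_powerset_insert hi, sum_flip i]
    refine le_trans (sum_le_sum (g := fun x => (G x ^ 2 + H x ^ 2) ^ m) fun x _ => ?_)
      (minkowski _ m hm G H _ _ _ (sum_nonneg fun _ _ => sq_nonneg _)
        (sum_nonneg fun _ _ => sq_nonneg _) (ih a) (ih fun v => a (insert i v)))
    rw [hGf, hHf]
    have e1 : sg ((x + Pi.single i 1 : Fin n → ZMod 2) i) = - sg (x i) := by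
      simp [sg_add, sg_one]
    rw [e1]
    have := two_point_s7 m hm ρ (G x) (sg (x i) * H x) hρ
    rw [mul_pow, sq (sg (x i)), sg_sq, one_mul] at this
    rw [show G x + ρ * (-sg (x i) * H x) = G x - ρ * (sg (x i) * H x) by ring]
    exact this

/-! ### Level weights of the indicator of `A` -/

noncomputable def Fc {n : ℕ} (A : Finset (Fin n → ZMod 2)) (v : Finset (Fin n)) : ℝ :=
  (∑ x ∈ A, chi v x) / A.card

noncomputable def Bp {n : ℕ} (A : Finset (Fin n → ZMod 2)) (τ : ℝ) : ℝ :=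
  ∑ v : Finset (Fin n), τ ^ v.card * Fc A v ^ 2

lemma Bp_eq {n : ℕ} (A : Finset (Fin n → ZMod 2)) (hA : 0 < A.card) (τ : ℝ) :
    ∑ x ∈ A, ∑ y ∈ A, ∏ i, (1 + τ * (sg (x i) * sg (y i))) = (A.card : ℝ) ^ 2 * Bp A τ := by
  have hA' : (A.card : ℝ) ≠ 0 := by positivity
  have e : ∀ x y : Fin n → ZMod 2, ∏ i, (1 + τ * (sg (x i) * sg (y i))) =
      ∑ v : Finset (Fin n), τ ^ v.card * (chi v x * chi v y) := by
    intro x y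
    rw [prod_one_add, powerset_univ]
    refine sum_congr rfl fun v _ => ?_
    rw [prod_mul_distrib, prod_mul_distrib, prod_const]; rfl
  simp only [e]
  have : ∀ v : Finset (Fin n), (A.card : ℝ) ^ 2 * (τ ^ v.card * Fc A v ^ 2) =
      ∑ x ∈ A, ∑ y ∈ A, τ ^ v.card * (chi v x * chi v y) := by
    intro v
    have h1 : ∑ x ∈ A, ∑ y ∈ A, τ ^ v.card * (chi v x * chi v y) =
        τ ^ v.card * ((∑ x ∈ A, chi v x) * ∑ y ∈ A, chi v y) := by
      rw [sum_mul_sum, mul_sum]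
      exact sum_congr rfl fun x _ => by rw [mul_sum]
    rw [h1]
    unfold Fc
    field_simp
  unfold Bp
  rw [mul_sum]
  simp only [this]
  rw [sum_comm]
  conv_rhs => rw [sum_comm]
  conv_lhs => rw [sum_comm]
  refine sum_congr rfl fun x _ => ?_
  rw [sum_comm]

lemma Fc_empty {n : ℕ} (A : Finset (Fin n → ZMod 2)) (hA : 0 < A.card) : Fc A ∅ = 1 := by
  have hA' : (A.card : ℝ) ≠ 0 := by positivity
  simp [Fc, chi, hA']

lemma one_le_Bp {n : ℕ} (A : Finset (Fin n → ZMod 2)) (hA : 0 < A.card) (τ : ℝ) (hτ : 0 ≤ τ) :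
    1 ≤ Bp A τ := by
  have := single_le_sum (f := fun v : Finset (Fin n) => τ ^ v.card * Fc A v ^ 2) (s := univ)
    (fun v _ => by positivity) (mem_univ ∅)
  simpa [Fc_empty A hA, Bp] using this

lemma Bp_hc {n : ℕ} (A : Finset (Fin n → ZMod 2)) (hA : 0 < A.card) (c τ : ℝ) (hτ : 0 ≤ τ)
    (hc : (2:ℝ) ^ n ≤ 2 ^ c * A.card) (m : ℕ) (hm : 1 ≤ m) (hτm : τ * (2 * m - 1) ≤ 1) :
    Bp A τ ^ m ≤ 2 ^ c := by
  have hA' : (0:ℝ) < A.card := by positivity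
  have h1 := hypercontractive (n := n) m hm (Real.sqrt τ) (by rwa [Real.sq_sqrt hτ]) univ
    (fun v => Real.sqrt τ ^ v.card * Fc A v)
  rw [powerset_univ] at h1
  set h : (Fin n → ZMod 2) → ℝ := fun x => ∑ v : Finset (Fin n), τ ^ v.card * Fc A v * chi v x with hh
  have e1 : ∀ x, ∑ v : Finset (Fin n), Real.sqrt τ ^ v.card * (Real.sqrt τ ^ v.card * Fc A v) * chi v x = h x := by
    intro x
    refine sum_congr rfl fun v _ => ?_
    rw [← mul_assoc, ← mul_pow, Real.mul_self_sqrt hτ]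
  have e2 : ∑ v : Finset (Fin n), (Real.sqrt τ ^ v.card * Fc A v) ^ 2 = Bp A τ := by
    refine sum_congr rfl fun v _ => ?_
    rw [mul_pow, ← pow_mul, mul_comm v.card, pow_mul, Real.sq_sqrt hτ]
  simp only [e1] at h1
  rw [e2] at h1
  have e3 : Bp A τ = ∑ x ∈ A, (1 / (A.card : ℝ)) * h x := by
    rw [← mul_sum, hh, sum_comm, mul_sum]
    refine sum_congr rfl fun v _ => ?_
    rw [← mul_sum, sq]
    unfold Fc
    field_simp
  have h2 := Real.pow_arith_mean_le_arith_mean_pow_of_even A (fun _ => 1 / (A.card : ℝ)) h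
    (fun _ _ => by positivity) (by simp [hA'.ne']) (n := 2 * m) (by simp)
  rw [← e3, ← mul_sum] at h2
  have h3 : ∑ x ∈ A, h x ^ (2 * m) ≤ ∑ x, h x ^ (2 * m) :=
    sum_le_sum_of_subset_of_nonneg (subset_univ _) (fun x _ _ => by rw [pow_mul]; positivity)
  have hB := one_le_Bp A hA τ hτ
  have hBm : 0 < Bp A τ ^ m := by positivity
  refine le_of_mul_le_mul_right ?_ hBm
  calc Bp A τ ^ m * Bp A τ ^ m = Bp A τ ^ (2 * m) := by ring
    _ ≤ 1 / (A.card : ℝ) * ∑ x ∈ A, h x ^ (2 * m) := h2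
    _ ≤ 1 / (A.card : ℝ) * ((2 ^ c * A.card) * Bp A τ ^ m) := by
        gcongr
        exact h3.trans (h1.trans (by gcongr))
    _ = _ := by field_simp

lemma Bp_le {n : ℕ} (A : Finset (Fin n → ZMod 2)) (hA : 0 < A.card) (c τ : ℝ) (hτ : 0 < τ)
    (hτ1 : τ ≤ 1) (hc0 : 0 ≤ c)
    (hc : (2:ℝ) ^ n ≤ 2 ^ c * A.card) : Bp A τ ≤ 2 ^ (3 * c * τ) := by
  set m := ⌊(1 / τ + 1) / 2⌋₊ with hmdef
  have h1τ : 1 ≤ 1 / τ := by rw [le_div_iff₀ hτ]; linarith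
  have hm : 1 ≤ m := by rw [hmdef, Nat.one_le_floor_iff]; linarith
  have hf1 : (m : ℝ) ≤ (1 / τ + 1) / 2 := Nat.floor_le (by positivity)
  have hf2 : (1 / τ + 1) / 2 < m + 1 := Nat.lt_floor_add_one _
  have hm1 : (1:ℝ) ≤ m := by exact_mod_cast hm
  have h2 : τ * (2 * m - 1) ≤ 1 := by
    have : 2 * (m:ℝ) - 1 ≤ 1 / τ := by linarith
    calc τ * (2 * m - 1) ≤ τ * (1 / τ) := by gcongr
      _ = 1 := by field_simp
  have h3 : 1 ≤ 3 * τ * m := by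
    have : 1 / τ ≤ 3 * m := by linarith
    rw [div_le_iff₀ hτ] at this; linarith
  have h4 := Bp_hc A hA c τ hτ.le hc m hm h2
  refine le_of_pow_le_pow_left₀ (n := m) (by omega) (by positivity) (h4.trans ?_)
  rw [← Real.rpow_natCast, ← Real.rpow_mul (by norm_num)]
  apply Real.rpow_le_rpow_of_exponent_le (by norm_num)
  nlinarith

lemma Bp_even {n : ℕ} (A : Finset (Fin n → ZMod 2)) (hA : 0 < A.card) (c τ : ℝ) (hτ : 0 ≤ τ)
    (hτ1 : τ ≤ 1) (hc1 : 1 ≤ c)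
    (hc : (2:ℝ) ^ n ≤ 2 ^ c * A.card) :
    (Bp A τ + Bp A (-τ)) / 2 ≤ 1 + 8 * (c * τ) ^ 2 * 2 ^ (3 * c * τ) := by
  have hc0 : 0 < c := by linarith
  have hle : ∀ k : ℕ, (-τ) ^ k ≤ τ ^ k := fun k => by
    calc (-τ) ^ k ≤ |(-τ) ^ k| := le_abs_self _
      _ = τ ^ k := by rw [abs_pow, abs_neg, abs_of_nonneg hτ]
  by_cases h : c * τ ≤ 1
  · have hB := Bp_le A hA c (1 / c) (by positivity) (by rw [div_le_iff₀ hc0]; linarith) hc0.le hc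
    rw [show 3 * c * (1 / c) = (3:ℕ) by field_simp; norm_num, Real.rpow_natCast] at hB
    have hcard : ∀ v : Finset (Fin n), (τ ^ v.card + (-τ) ^ v.card) / 2 * Fc A v ^ 2 ≤
        (if v = ∅ then 1 else 0) + (c * τ) ^ 2 * ((1 / c) ^ v.card * Fc A v ^ 2) := by
      intro v
      by_cases hv : v = ∅
      · subst hv
        simp [Fc_empty A hA]; positivity
      · rw [if_neg hv, zero_add, ← mul_assoc]
        refine mul_le_mul_of_nonneg_right ?_ (sq_nonneg _)
        rcases Nat.even_or_odd v.card with he | ho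
        · have h2 : 2 ≤ v.card := by
            have : v.card ≠ 0 := by simpa using hv
            obtain ⟨k, hk⟩ := he
            omega
          rw [he.neg_pow, add_self_div_two]
          calc τ ^ v.card = (c * τ) ^ v.card * (1 / c) ^ v.card := by
                rw [← mul_pow]; congr 1; field_simp
            _ ≤ (c * τ) ^ 2 * (1 / c) ^ v.card := by
                have := pow_le_pow_of_le_one (by positivity : 0 ≤ c * τ) h h2
                gcongr
        · rw [ho.neg_pow, add_neg_cancel, zero_div]; positivity
    have hs : (Bp A τ + Bp A (-τ)) / 2 = ∑ v : Finset (Fin n), (τ ^ v.card + (-τ) ^ v.card) / 2 * Fc A v ^ 2 := by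
      unfold Bp
      rw [← sum_add_distrib, sum_div]
      exact sum_congr rfl fun v _ => by ring
    have h1 : (1:ℝ) ≤ 2 ^ (3 * c * τ) := Real.one_le_rpow (by norm_num) (by positivity)
    calc (Bp A τ + Bp A (-τ)) / 2 ≤ 1 + (c * τ) ^ 2 * Bp A (1 / c) := by
          rw [hs]
          refine (sum_le_sum fun v _ => hcard v).trans ?_
          rw [sum_add_distrib, ← mul_sum]
          simp [Bp]
      _ ≤ 1 + (c * τ) ^ 2 * 2 ^ 3 := by gcongr
      _ ≤ 1 + 8 * (c * τ) ^ 2 * 2 ^ (3 * c * τ) := by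
          nlinarith [mul_le_mul_of_nonneg_left h1 (sq_nonneg (c * τ))]
  · push Not at h
    have hτ0 : 0 < τ := by
      rcases hτ.eq_or_lt with h0 | h0
      · rw [← h0] at h; norm_num at h
      · exact h0
    have hB := Bp_le A hA c τ hτ0 hτ1 hc0.le hc
    have hB2 : Bp A (-τ) ≤ Bp A τ := sum_le_sum fun v _ => by
      have := hle v.card
      gcongr
    have h1 : (0:ℝ) < 2 ^ (3 * c * τ) := by positivity
    have h2 : 1 ≤ (c * τ) ^ 2 := one_le_pow₀ h.le
    nlinarith [mul_le_mul_of_nonneg_right h2 h1.le]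

lemma tanh_bounds (t : ℝ) (ht : 0 ≤ t) : 0 ≤ Real.tanh t ∧ Real.tanh t ≤ 1 ∧ Real.tanh t ≤ 2 * t := by
  have hc := Real.cosh_pos t
  have h0 : 0 ≤ Real.tanh t := by
    rw [Real.tanh_eq_sinh_div_cosh]; exact div_nonneg (Real.sinh_nonneg_iff.2 ht) hc.le
  refine ⟨h0, (Real.tanh_lt_one t).le, ?_⟩
  rw [Real.tanh_eq_sinh_div_cosh, div_le_iff₀ hc, Real.sinh_eq, Real.cosh_eq]
  have h1 := Real.add_one_le_exp (-(2 * t))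
  have h2 : Real.exp (-t) = Real.exp t * Real.exp (-(2*t)) := by rw [← Real.exp_add]; ring_nf
  have h3 := Real.exp_pos t
  have h4 := Real.exp_pos (-t)
  nlinarith [mul_nonneg ht h4.le]

noncomputable def SS {n : ℕ} (x y : Fin n → ZMod 2) : ℝ := ∑ i, sg (x i) * sg (y i)

lemma exp_sg (t s : ℝ) (hs : s = 1 ∨ s = -1) :
    Real.exp (t * s) = Real.cosh t * (1 + Real.tanh t * s) := by
  have hc := Real.cosh_pos t
  rw [Real.tanh_eq_sinh_div_cosh]
  rcases hs with rfl | rfl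
  · have := Real.cosh_add_sinh t
    field_simp; rw [← this]
  · have := Real.cosh_sub_sinh t
    field_simp; rw [← this]; ring_nf

lemma sum_exp {n : ℕ} (A : Finset (Fin n → ZMod 2)) (hA : 0 < A.card) (t : ℝ) :
    ∑ x ∈ A, ∑ y ∈ A, Real.exp (t * SS x y) = (A.card : ℝ) ^ 2 * (Real.cosh t ^ n * Bp A (Real.tanh t)) := by
  have : ∀ x y : Fin n → ZMod 2, Real.exp (t * SS x y) =
      Real.cosh t ^ n * ∏ i, (1 + Real.tanh t * (sg (x i) * sg (y i))) := by
    intro x y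
    rw [SS, mul_sum, Real.exp_sum]
    rw [prod_congr rfl fun i _ => exp_sg t (sg (x i) * sg (y i))
      (by rw [← sg_add]; exact sg_cases _), prod_mul_distrib]
    simp
  simp only [this, ← mul_sum]
  rw [Bp_eq A hA]; ring

lemma sum_cosh_le {n : ℕ} (A : Finset (Fin n → ZMod 2)) (hA : 0 < A.card) (c t : ℝ)
    (hc1 : 1 ≤ c) (hc : (2:ℝ) ^ n ≤ 2 ^ c * A.card) :
    ∑ x ∈ A, ∑ y ∈ A, Real.cosh (t * SS x y) ≤
      (A.card : ℝ) ^ 2 * (Real.exp (n * t ^ 2 / 2) * (1 + 32 * (c * t) ^ 2 * Real.exp (6 * c * |t|))) := by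
  wlog ht : 0 ≤ t generalizing t with H
  · have := H (-t) (by linarith)
    simpa [Real.cosh_neg] using this
  obtain ⟨h0, h1, h2⟩ := tanh_bounds t ht
  have hB := Bp_even A hA c (Real.tanh t) h0 h1 hc1 hc
  have e : ∑ x ∈ A, ∑ y ∈ A, Real.cosh (t * SS x y) =
      (A.card : ℝ) ^ 2 * (Real.cosh t ^ n * ((Bp A (Real.tanh t) + Bp A (-Real.tanh t)) / 2)) := by
    have a1 := sum_exp A hA t
    have a2 := sum_exp A hA (-t)
    rw [Real.cosh_neg, Real.tanh_neg] at a2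
    have : ∑ x ∈ A, ∑ y ∈ A, Real.cosh (t * SS x y) =
      (∑ x ∈ A, ∑ y ∈ A, Real.exp (t * SS x y) + ∑ x ∈ A, ∑ y ∈ A, Real.exp (-t * SS x y)) / 2 := by
      simp only [← sum_add_distrib, sum_div]
      refine sum_congr rfl fun x _ => sum_congr rfl fun y _ => ?_
      rw [Real.cosh_eq, neg_mul]
    rw [this, a1, a2]; ring
  rw [e]
  have hcosh : Real.cosh t ^ n ≤ Real.exp (n * t ^ 2 / 2) := by
    calc Real.cosh t ^ n ≤ Real.exp (t ^ 2 / 2) ^ n := by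
          exact pow_le_pow_left₀ (Real.cosh_pos t).le (Real.cosh_le_exp_half_sq t) n
      _ = _ := by rw [← Real.exp_nat_mul]; ring_nf
  have hc0 : 0 < c := by linarith
  have h2e : (2:ℝ) ^ (3 * c * Real.tanh t) ≤ Real.exp (6 * c * |t|) := by
    rw [Real.rpow_def_of_pos (by norm_num), abs_of_nonneg ht]
    apply Real.exp_le_exp.2
    have hl : Real.log 2 ≤ 1 := by linarith [Real.log_two_lt_d9]
    calc Real.log 2 * (3 * c * Real.tanh t) ≤ 1 * (3 * c * (2 * t)) := by gcongr
      _ = _ := by ring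
  have h3 : (Bp A (Real.tanh t) + Bp A (-Real.tanh t)) / 2 ≤ 1 + 32 * (c * t) ^ 2 * Real.exp (6 * c * |t|) := by
    refine hB.trans ?_
    have : (c * Real.tanh t) ^ 2 ≤ (c * (2 * t)) ^ 2 := by gcongr
    calc _ ≤ 1 + 8 * (c * (2 * t)) ^ 2 * Real.exp (6 * c * |t|) := by gcongr
      _ = _ := by ring
  have h4 : 0 ≤ 1 + 32 * (c * t) ^ 2 * Real.exp (6 * c * |t|) := by positivity
  have := (Real.cosh_pos t).le
  exact mul_le_mul_of_nonneg_left ((mul_le_mul_of_nonneg_left h3 (by positivity)).trans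
    (mul_le_mul_of_nonneg_right hcosh h4)) (by positivity)

/-! ### Gaussian linearisation -/

open MeasureTheory in
lemma gauss_exp (s : ℝ) : Integrable (fun g : ℝ => Real.exp (-(1/2) * g ^ 2) * Real.exp (s * g)) ∧
    ∫ g : ℝ, Real.exp (-(1/2) * g ^ 2) * Real.exp (s * g) = Real.sqrt (2 * Real.pi) * Real.exp (s ^ 2 / 2) := by
  have e : (fun g : ℝ => Real.exp (-(1/2) * g ^ 2) * Real.exp (s * g)) =
      fun g => Real.exp (s ^ 2 / 2) * Real.exp (-(1/2) * (g - s) ^ 2) := by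
    funext g
    rw [← Real.exp_add, ← Real.exp_add]; ring_nf
  rw [e]
  constructor
  · exact ((integrable_exp_neg_mul_sq (by norm_num : (0:ℝ) < 1/2)).comp_sub_right s).const_mul _
  · rw [integral_const_mul, integral_sub_right_eq_self (fun g : ℝ => Real.exp (-(1/2) * g ^ 2)) s,
      integral_gaussian, mul_comm]
    congr 2; ring

open MeasureTheory in
lemma gauss_cosh (s : ℝ) : Integrable (fun g : ℝ => Real.exp (-(1/2) * g ^ 2) * Real.cosh (s * g)) ∧
    ∫ g : ℝ, Real.exp (-(1/2) * g ^ 2) * Real.cosh (s * g) = Real.sqrt (2 * Real.pi) * Real.exp (s ^ 2 / 2) := by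
  obtain ⟨i1, h1⟩ := gauss_exp s
  obtain ⟨i2, h2⟩ := gauss_exp (-s)
  have e : (fun g : ℝ => Real.exp (-(1/2) * g ^ 2) * Real.cosh (s * g)) =
      fun g => (Real.exp (-(1/2) * g ^ 2) * Real.exp (s * g) +
        Real.exp (-(1/2) * g ^ 2) * Real.exp (-s * g)) / 2 := by
    funext g
    rw [Real.cosh_eq, neg_mul]; ring
  rw [e]
  refine ⟨(i1.add i2).div_const 2, ?_⟩
  rw [integral_div, integral_add i1 i2, h1, h2]
  ring_nf

open MeasureTheory in
lemma sum_gauss {n : ℕ} (A : Finset (Fin n → ZMod 2)) (hA : 0 < A.card) (c p α : ℝ)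
    (hc1 : 1 ≤ c) (hc : (2:ℝ) ^ n ≤ 2 ^ c * A.card) (hp : 0 ≤ p) (hα : n * p = α)
    (hα1 : α ≤ 1 / 4) (hcp : c ^ 2 * p ≤ 1) :
    ∑ x ∈ A, ∑ y ∈ A, Real.exp (p * SS x y ^ 2 / 2) ≤
      (A.card : ℝ) ^ 2 * ((Real.sqrt (1 - α))⁻¹ + 512 * Real.exp 72 * (c ^ 2 * p)) := by
  have hpos : 0 < Real.sqrt (2 * Real.pi) := Real.sqrt_pos.2 (by positivity)
  have hc0 : 0 < c := by linarith
  have hcs : c * Real.sqrt p ≤ 1 := by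
    have : (c * Real.sqrt p) ^ 2 ≤ 1 := by rw [mul_pow, Real.sq_sqrt hp]; exact hcp
    exact (sq_le_one_iff₀ (by positivity)).1 this
  set K : ℝ := 256 * Real.exp 72 * (c ^ 2 * p) with hK
  have hK0 : 0 ≤ K := by positivity
  have hpt : ∀ g : ℝ, ∑ x ∈ A, ∑ y ∈ A, Real.exp (-(1/2) * g ^ 2) * Real.cosh (Real.sqrt p * SS x y * g) ≤
      (A.card : ℝ) ^ 2 * (Real.exp (-((1 - α) / 2) * g ^ 2) + K * Real.exp (-(1/8) * g ^ 2)) := by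
    intro g
    have h := sum_cosh_le A hA c (Real.sqrt p * g) hc1 hc
    have hn : (n:ℝ) * (Real.sqrt p * g) ^ 2 / 2 = α / 2 * g ^ 2 := by
      rw [mul_pow, Real.sq_sqrt hp, ← hα]; ring
    rw [hn] at h
    have e1 : ∑ x ∈ A, ∑ y ∈ A, Real.exp (-(1/2) * g ^ 2) * Real.cosh (Real.sqrt p * SS x y * g) =
        Real.exp (-(1/2) * g ^ 2) * ∑ x ∈ A, ∑ y ∈ A, Real.cosh (Real.sqrt p * g * SS x y) := by
      simp only [mul_sum]
      refine sum_congr rfl fun x _ => sum_congr rfl fun y _ => ?_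
      congr 2; ring
    rw [e1]
    have b1 : 32 * (c * (Real.sqrt p * g)) ^ 2 * Real.exp (6 * c * |Real.sqrt p * g|) ≤
        K * Real.exp (1/4 * g ^ 2) := by
      have b2 : 6 * c * |Real.sqrt p * g| ≤ g ^ 2 / 8 + 72 := by
        rw [abs_mul, abs_of_nonneg (Real.sqrt_nonneg p)]
        have : c * Real.sqrt p * |g| ≤ 1 * |g| := by gcongr
        nlinarith [sq_nonneg (|g| - 24), sq_abs g]
      have b3 : g ^ 2 ≤ 8 * Real.exp (g ^ 2 / 8) := by
        linarith [Real.add_one_le_exp (g ^ 2 / 8)]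
      calc 32 * (c * (Real.sqrt p * g)) ^ 2 * Real.exp (6 * c * |Real.sqrt p * g|)
          = 32 * (c ^ 2 * p) * g ^ 2 * Real.exp (6 * c * |Real.sqrt p * g|) := by
            rw [mul_pow, mul_pow, Real.sq_sqrt hp]; ring
        _ ≤ 32 * (c ^ 2 * p) * (8 * Real.exp (g ^ 2 / 8)) * Real.exp (g ^ 2 / 8 + 72) := by gcongr
        _ = K * (Real.exp (g ^ 2 / 8) * Real.exp (g ^ 2 / 8)) := by rw [Real.exp_add, hK]; ring
        _ = _ := by rw [← Real.exp_add]; ring_nf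
    calc Real.exp (-(1/2) * g ^ 2) * ∑ x ∈ A, ∑ y ∈ A, Real.cosh (Real.sqrt p * g * SS x y)
        ≤ Real.exp (-(1/2) * g ^ 2) * ((A.card : ℝ) ^ 2 * (Real.exp (α / 2 * g ^ 2) * (1 + K * Real.exp (1/4 * g ^ 2)))) := by
          refine mul_le_mul_of_nonneg_left (h.trans ?_) (Real.exp_pos _).le
          gcongr
      _ = (A.card : ℝ) ^ 2 * (Real.exp (-((1 - α) / 2) * g ^ 2) + K * Real.exp (-(1/4 - α / 2) * g ^ 2)) := by
          rw [show -((1 - α) / 2) * g ^ 2 = -(1/2) * g ^ 2 + α / 2 * g ^ 2 by ring,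
            show -(1/4 - α / 2) * g ^ 2 = -(1/2) * g ^ 2 + α / 2 * g ^ 2 + 1/4 * g ^ 2 by ring,
            Real.exp_add, Real.exp_add, Real.exp_add]
          ring
      _ ≤ _ := by
          gcongr
          linarith
  have hint := integral_mono (μ := volume)
    (f := fun g : ℝ => ∑ x ∈ A, ∑ y ∈ A, Real.exp (-(1/2) * g ^ 2) * Real.cosh (Real.sqrt p * SS x y * g))
    (g := fun g : ℝ => (A.card : ℝ) ^ 2 * (Real.exp (-((1 - α) / 2) * g ^ 2) + K * Real.exp (-(1/8) * g ^ 2)))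
    (integrable_finsetSum _ fun x _ => integrable_finsetSum _ fun y _ => (gauss_cosh _).1)
    (((integrable_exp_neg_mul_sq (by linarith)).add
      ((integrable_exp_neg_mul_sq (by norm_num)).const_mul K)).const_mul _) hpt
  rw [integral_finsetSum _ fun x _ => integrable_finsetSum _ fun y _ => (gauss_cosh _).1] at hint
  rw [sum_congr rfl fun x _ => integral_finsetSum _ fun y _ => (gauss_cosh _).1] at hint
  rw [integral_const_mul, integral_add (integrable_exp_neg_mul_sq (by linarith))
      ((integrable_exp_neg_mul_sq (by norm_num)).const_mul K), integral_const_mul,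
      integral_gaussian, integral_gaussian] at hint
  rw [sum_congr rfl fun x _ => sum_congr rfl fun y _ => (gauss_cosh _).2] at hint
  simp only [← mul_sum] at hint
  have e1 : Real.sqrt (Real.pi / ((1 - α) / 2)) = Real.sqrt (2 * Real.pi) * (Real.sqrt (1 - α))⁻¹ := by
    rw [← div_eq_mul_inv, ← Real.sqrt_div (by positivity)]
    congr 1
    have : 1 - α ≠ 0 := by linarith
    field_simp
  have e2 : Real.sqrt (Real.pi / (1/8)) = Real.sqrt (2 * Real.pi) * 2 := by
    rw [show Real.pi / (1/8) = (2 * Real.pi) * 2 ^ 2 by ring, Real.sqrt_mul (by positivity),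
      Real.sqrt_sq (by norm_num)]
  rw [e1, e2] at hint
  refine le_of_mul_le_mul_left ?_ hpos
  calc _ = Real.sqrt (2 * Real.pi) * ∑ x ∈ A, ∑ y ∈ A, Real.exp ((Real.sqrt p * SS x y) ^ 2 / 2) := by
        congr 1
        refine sum_congr rfl fun x _ => sum_congr rfl fun y _ => ?_
        rw [mul_pow, Real.sq_sqrt hp]
    _ ≤ _ := hint
    _ = _ := by rw [hK]; ring

/-! ### Edge sums -/

lemma sum_edges {n : ℕ} (s : Fin n → ℝ) (f : Sym2 (Fin n) → ℝ) (hf : ∀ u v, f s(u, v) = s u * s v) :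
    ∑ e ∈ potentialEdges n, f e = ((∑ i, s i) ^ 2 - ∑ i, s i ^ 2) / 2 := by
  have h := Finset.sum_sym2_filter_not_isDiag (univ : Finset (Fin n)) f
  rw [sym2_univ] at h
  have h' : ∑ e ∈ potentialEdges n, f e = ∑ i : Fin n, ∑ j : Fin n, if i < j then s i * s j else 0 := by
    unfold potentialEdges
    rw [h, ← sum_product', ← sum_filter]
    simp only [hf]
    refine sum_congr ?_ fun _ _ => rfl
    ext ⟨i, j⟩
    simp only [mem_filter, mem_offDiag, mem_univ, true_and, mem_product]
    constructor
    · intro h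
      exact h.2
    · intro h
      have h' : i < j := by tauto
      exact ⟨h'.ne, h'⟩
  have h2 : ∑ i : Fin n, ∑ j : Fin n, (if i < j then s i * s j else 0) =
      ∑ i : Fin n, ∑ j : Fin n, if j < i then s i * s j else 0 := by
    rw [sum_comm]
    refine sum_congr rfl fun i _ => sum_congr rfl fun j _ => ?_
    rw [mul_comm]
  have h3 : (∑ i, s i) ^ 2 = ∑ i : Fin n, ∑ j : Fin n, (if i < j then s i * s j else 0) +
      ∑ i : Fin n, ∑ j : Fin n, (if j < i then s i * s j else 0) + ∑ i, s i ^ 2 := by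
    rw [sq, sum_mul_sum]
    simp only [← sum_add_distrib]
    refine sum_congr rfl fun i _ => ?_
    have : s i ^ 2 = ∑ j, if j = i then s i * s j else 0 := by simp [sq]
    rw [this, ← sum_add_distrib]
    refine sum_congr rfl fun j _ => ?_
    rcases lt_trichotomy i j with h | h | h
    · simp [h, h.not_gt, h.ne']
    · simp [h]
    · simp [h, h.not_gt, h.ne]
  rw [h', h3, ← h2]; ring

lemma card_edges (n : ℕ) : ((potentialEdges n).card : ℝ) = ((n:ℝ) ^ 2 - n) / 2 := by
  have := sum_edges (n := n) (fun _ => 1) (fun _ => 1) (by simp)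
  simpa using this

lemma one_add_le (p a : ℝ) (hp : 0 ≤ p) (hp1 : p ≤ 1 / 16) (ha : a = 1 ∨ a = -1) :
    1 + p * a ≤ Real.exp (-p ^ 2 / 2 + p ^ 3 + p * a) := by
  rcases ha with rfl | rfl
  · have h0 : 0 ≤ -p ^ 2 / 2 + p ^ 3 + p * 1 := by nlinarith [pow_nonneg hp 3]
    refine le_trans ?_ (Real.quadratic_le_exp_of_nonneg h0)
    have h3 := pow_nonneg hp 3
    have h4 := pow_nonneg hp 4
    have h5 := pow_nonneg hp 5
    have h6 := pow_nonneg hp 6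
    nlinarith [mul_nonneg h4 (sub_nonneg.2 hp1)]
  · have h1 : 0 < 1 - p := by linarith
    have hs := Real.hasSum_pow_div_log_of_abs_lt_one (x := p) (by rw [abs_of_nonneg hp]; linarith)
    have h2 := sum_le_hasSum (range 2) (fun i _ => by positivity) hs
    simp [sum_range_succ] at h2
    norm_num at h2
    have h3 : Real.log (1 - p) ≤ -p ^ 2 / 2 + p ^ 3 + p * -1 := by
      have := pow_nonneg hp 3
      linarith
    calc 1 + p * -1 = Real.exp (Real.log (1 - p)) := by rw [Real.exp_log h1]; ring
      _ ≤ _ := Real.exp_le_exp.2 h3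

noncomputable def ea {n : ℕ} (x y : Fin n → ZMod 2) (e : Sym2 (Fin n)) : ℝ :=
  sg (edgeParity x e) * sg (edgeParity y e)

lemma ea_cases {n : ℕ} (x y : Fin n → ZMod 2) (e : Sym2 (Fin n)) : ea x y e = 1 ∨ ea x y e = -1 := by
  unfold ea; rw [← sg_add]; exact sg_cases _

lemma ea_mk {n : ℕ} (x y : Fin n → ZMod 2) (u v : Fin n) :
    ea x y s(u, v) = (sg (x u) * sg (y u)) * (sg (x v) * sg (y v)) := by
  simp only [ea, edgeParity, Sym2.lift_mk, sg_add]; ring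

lemma prod_edges_le {n : ℕ} (x y : Fin n → ZMod 2) (p : ℝ) (hp : 0 ≤ p) (hp1 : p ≤ 1 / 16) :
    ∏ e ∈ potentialEdges n, (1 + p * ea x y e) ≤
      Real.exp (((n:ℝ) ^ 2 - n) / 2 * (-p ^ 2 / 2 + p ^ 3) - n * p / 2) * Real.exp (p * SS x y ^ 2 / 2) := by
  have h1 : ∏ e ∈ potentialEdges n, (1 + p * ea x y e) ≤
      ∏ e ∈ potentialEdges n, Real.exp (-p ^ 2 / 2 + p ^ 3 + p * ea x y e) := by
    refine prod_le_prod (fun e _ => ?_) fun e _ => one_add_le p _ hp hp1 (ea_cases x y e)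
    rcases ea_cases x y e with h | h <;> rw [h] <;> linarith
  refine h1.trans (le_of_eq ?_)
  rw [← Real.exp_sum, ← Real.exp_add, sum_add_distrib, sum_const, nsmul_eq_mul, card_edges, ← mul_sum,
    sum_edges (fun i => sg (x i) * sg (y i)) _ (ea_mk x y)]
  have : ∑ i : Fin n, (sg (x i) * sg (y i)) ^ 2 = n := by
    have : ∀ i, (sg (x i) * sg (y i)) ^ 2 = 1 := fun i => by
      rw [← sg_add, sq, sg_sq]
    simp [this]
  rw [this]
  congr 1
  unfold SS
  ring

lemma scalar_bound (n : ℕ) (hn : 1 ≤ n) (α : ℝ) (h0 : 0 < α) (h1 : α < 1 / 16) (hnα : 1 / (n:ℝ) ≤ α) (R : ℝ)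
    (hR : 0 ≤ R) :
    Real.exp (((n:ℝ) ^ 2 - n) / 2 * (-(α / n) ^ 2 / 2 + (α / n) ^ 3) - α / 2) *
      ((Real.sqrt (1 - α))⁻¹ + R) ≤ 1 + 4 * α ^ 3 + R := by
  have hn1 : (1:ℝ) ≤ n := by exact_mod_cast hn
  have hn0 : (0:ℝ) < n := by linarith
  set E := ((n:ℝ) ^ 2 - n) / 2 * (-(α / n) ^ 2 / 2 + (α / n) ^ 3) - α / 2 with hE
  set i : ℝ := 1 / (n:ℝ) with hi
  have hi0 : 0 < i := by positivity
  have hi1 : i ≤ 1 := by rw [hi, div_le_one hn0]; exact hn1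
  have hE' : E = (1 - i) / 2 * α ^ 2 * (-1/2 + α * i) - α / 2 := by
    rw [hE, hi]; field_simp
  have hα3 : 0 < α ^ 3 := by positivity
  have hE0 : E ≤ 0 := by
    rw [hE']
    have : (1 - i) / 2 * α ^ 2 * (-1/2 + α * i) ≤ 0 := by
      apply mul_nonpos_of_nonneg_of_nonpos
      · have : 0 ≤ 1 - i := by linarith
        positivity
      · nlinarith
    linarith
  set q := α + α ^ 2 / 2 + α ^ 3 with hq
  have hsq : (Real.sqrt (1 - α))⁻¹ ≤ Real.exp (q / 2) := by
    have hq0 : 0 ≤ q := by positivity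
    have e1 := Real.quadratic_le_exp_of_nonneg hq0
    have e2 : 1 ≤ (1 - α) * (1 + q + q ^ 2 / 2) := by
      rw [hq]
      have h4 : 0 < α ^ 4 := by positivity
      have h5 : 0 < α ^ 5 := by positivity
      have h6 : 0 < α ^ 6 := by positivity
      nlinarith [mul_pos hα3 (sub_pos.2 h1), mul_pos h4 (sub_pos.2 h1), mul_pos h5 (sub_pos.2 h1), mul_pos h6 (sub_pos.2 h1)]
    have e3 : 1 ≤ (1 - α) * Real.exp q := e2.trans (mul_le_mul_of_nonneg_left e1 (by linarith))
    have hs : 0 < Real.sqrt (1 - α) := Real.sqrt_pos.2 (by linarith)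
    rw [inv_le_iff_one_le_mul₀ hs, Real.exp_half, ← Real.sqrt_mul (Real.exp_pos _).le, Real.one_le_sqrt]
    linarith
  have hEq : E + q / 2 ≤ 2 * α ^ 3 := by
    rw [hE', hq]
    have a1 : α ^ 2 * i ≤ α ^ 2 * α := by gcongr
    have a2 : α ^ 3 * i ≤ α ^ 3 * 1 := by gcongr
    have a3 : 0 ≤ α ^ 3 * i ^ 2 := by positivity
    nlinarith
  have hexp : Real.exp (2 * α ^ 3) ≤ 1 + 4 * α ^ 3 := by
    have b1 : 2 * α ^ 3 ≤ 1 := by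
      have : α ^ 3 ≤ (1/16) ^ 3 := by gcongr
      norm_num at this; linarith
    have := Real.abs_exp_sub_one_le (x := 2 * α ^ 3) (by rw [abs_of_pos (by positivity)]; exact b1)
    rw [abs_of_pos (by positivity : 0 < 2 * α ^ 3)] at this
    linarith [le_abs_self (Real.exp (2 * α ^ 3) - 1)]
  calc Real.exp E * ((Real.sqrt (1 - α))⁻¹ + R) ≤ Real.exp E * Real.exp (q / 2) + 1 * R := by
        rw [mul_add]
        have := Real.exp_le_one_iff.2 hE0
        gcongr
    _ = Real.exp (E + q / 2) + R := by rw [Real.exp_add]; ring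
    _ ≤ Real.exp (2 * α ^ 3) + R := by gcongr
    _ ≤ _ := by linarith

/-! ### Total variation -/

lemma tv_sq_le {Ω : Type*} [Fintype Ω] (p : Ω → ℝ) (K : ℝ) (hK : (Fintype.card Ω : ℝ) = K) (hK0 : 0 < K)
    (hp : ∑ ω, p ω = 1) : tvDist p (fun _ => K⁻¹) ^ 2 ≤ (1 / 4) * (K * ∑ ω, p ω ^ 2 - 1) := by
  unfold tvDist
  have h := sq_sum_le_card_mul_sum_sq (s := (univ : Finset Ω)) (f := fun ω => |p ω - K⁻¹|)
  rw [card_univ, hK] at h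
  simp only [sq_abs] at h
  have e : ∑ ω, (p ω - K⁻¹) ^ 2 = ∑ ω, p ω ^ 2 - K⁻¹ := by
    have : ∀ ω, (p ω - K⁻¹) ^ 2 = p ω ^ 2 - 2 * K⁻¹ * p ω + K⁻¹ ^ 2 := fun ω => by ring
    simp only [this]
    rw [sum_add_distrib, sum_sub_distrib, ← mul_sum, hp, sum_const, card_univ, nsmul_eq_mul, hK]
    field_simp; ring
  rw [e, mul_sub, mul_inv_cancel₀ hK0.ne'] at h
  rw [mul_pow]
  linarith

open Classical in
lemma tv_bound {n : ℕ} (A : Finset (Fin n → ZMod 2)) (hA : 0 < A.card) (S : Finset (Sym2 (Fin n))) :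
    (tvDist
      (fun z : ↥S → ZMod 2 =>
        ((A.filter (fun x => ∀ e : ↥S, edgeParity x ↑e = z e)).card : ℝ) /
          (A.card : ℝ))
      (fun _ : ↥S → ZMod 2 => ((2 : ℝ) ^ S.card)⁻¹)) ^ 2 ≤
    (1 / 4) * (((A.card : ℝ) ^ 2)⁻¹ * ∑ x ∈ A, ∑ y ∈ A, ∏ e ∈ S, (1 + ea x y e) - 1) := by
  have hA' : (A.card : ℝ) ≠ 0 := by positivity
  set φ : (Fin n → ZMod 2) → (↥S → ZMod 2) := fun x e => edgeParity x ↑e with hφ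
  have e1 : ∀ z : ↥S → ZMod 2, ((A.filter (fun x => ∀ e : ↥S, edgeParity x ↑e = z e)).card : ℝ) =
      ∑ x ∈ A, if φ x = z then 1 else 0 := by
    intro z
    rw [card_filter, Nat.cast_sum]
    refine sum_congr rfl fun x _ => ?_
    simp only [hφ, funext_iff, Nat.cast_ite, Nat.cast_one, Nat.cast_zero]
  simp only [e1]
  refine (tv_sq_le _ _ (by simp [ZMod.card]) (by positivity) ?_).trans (le_of_eq ?_)
  · rw [← sum_div, sum_comm]
    simp [hA']
  · congr 2
    simp only [div_pow]
    rw [← sum_div, mul_div_assoc', div_eq_inv_mul]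
    congr 1
    simp only [sq, sum_mul_sum]
    rw [sum_comm, mul_sum]
    refine sum_congr rfl fun x _ => ?_
    rw [sum_comm, mul_sum]
    refine sum_congr rfl fun y _ => ?_
    simp only [mul_ite, mul_one, mul_zero, ← ite_and]
    have e2 : ∀ e, 1 + ea x y e = if edgeParity x e = edgeParity y e then 2 else 0 := fun e => one_add_sg _ _
    simp only [e2]
    by_cases h : φ x = φ y
    · have h2 : ∀ e ∈ S, edgeParity x e = edgeParity y e := fun e he => congrFun h ⟨e, he⟩
      rw [prod_congr rfl fun e he => if_pos (h2 e he)]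
      simp [h]
    · have h2 : ∃ e ∈ S, edgeParity x e ≠ edgeParity y e := by
        by_contra hcon
        push Not at hcon
        exact h (funext fun e => hcon e e.2)
      obtain ⟨e, he, hne⟩ := h2
      rw [prod_eq_zero he (if_neg hne)]
      have : ∀ z, ¬ (φ y = z ∧ φ x = z) := fun z hz => h (hz.2.trans hz.1.symm)
      simp [this]

lemma er_sum {n : ℕ} (p : ℝ) (a : Sym2 (Fin n) → ℝ) :
    ∑ S ∈ (potentialEdges n).powerset, erWeight n p S * ∏ e ∈ S, (1 + a e) =
      ∏ e ∈ potentialEdges n, (1 + p * a e) := by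
  have : ∀ e, 1 + p * a e = p * (1 + a e) + (1 - p) := fun e => by ring
  simp only [this]
  rw [prod_add]
  refine sum_congr rfl fun S hS => ?_
  rw [prod_mul_distrib, prod_const, prod_const, card_sdiff_of_subset (mem_powerset.1 hS)]
  unfold erWeight
  ring

set_option maxHeartbeats 1000000 in
open Classical in
/-- there are absolute constants `C > 0`, `α₀ > 0` and `γ₀ ∈ (0,1)` such that
for all `γ ∈ (n^{-1/10}, γ₀)`, `α ∈ (n^{-1/10}, 1/16)` with `α < α₀`,
`c' ≤ γ√n + log₂(2/γ)`, and `A ⊆ {0,1}^n` with `|A| ≥ 2^{n−c'}`: for `G ∼ G(n, α/n)` with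
edge set `S` (so `r = |S|` edges, incidence matrix `M`), the distribution
`p_M(z) = |{x ∈ A : Mx = z}|/|A|` on `{0,1}^r` (indexed here by `z : ↥S → ZMod 2`, where
`(Mx)_e = x u + x v` for `e = {u,v}`) satisfies `E_G[‖p_M − U_r‖²_tvd] ≤ C(γ² + α³)`. -/
theorem stmt7 :
    ∃ C : ℝ, 0 < C ∧ ∃ α₀ : ℝ, 0 < α₀ ∧ ∃ γ₀ : ℝ, 0 < γ₀ ∧ γ₀ < 1 ∧
      ∀ (n : ℕ) (γ α c' : ℝ) (A : Finset (Fin n → ZMod 2)),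
        (n : ℝ) ^ (-(1 : ℝ) / 10) < γ → γ < γ₀ →
        (n : ℝ) ^ (-(1 : ℝ) / 10) < α → α < 1 / 16 → α < α₀ →
        c' ≤ γ * Real.sqrt n + Real.logb 2 (2 / γ) →
        (2 : ℝ) ^ ((n : ℝ) - c') ≤ (A.card : ℝ) →
        ∑ S ∈ (potentialEdges n).powerset,
            erWeight n (α / n) S *
              (tvDist
                  (fun z : ↥S → ZMod 2 =>
                    ((A.filter (fun x => ∀ e : ↥S, edgeParity x ↑e = z e)).card : ℝ) /
                      (A.card : ℝ))
                  (fun _ : ↥S → ZMod 2 => ((2 : ℝ) ^ S.card)⁻¹)) ^ 2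
          ≤ C * (γ ^ 2 + α ^ 3) := by
  have hKbig : (1:ℝ) ≤ Real.exp 72 := Real.one_le_exp (by norm_num)
  refine ⟨512 * Real.exp 72, by positivity, 1, one_pos, 1 / 2, by norm_num, by norm_num, ?_⟩
  intro n γ α c' A hγ hγ1 hα hα1 _ hc' hA
  have hA0 : 0 < A.card := by
    have : (0:ℝ) < A.card := lt_of_lt_of_le (by positivity) hA
    exact_mod_cast this
  have hAr : (A.card : ℝ) ≠ 0 := by positivity
  have hr0 : 0 ≤ (n:ℝ) ^ (-(1:ℝ)/10) := by positivity
  have hγ0 : 0 < γ := lt_of_le_of_lt hr0 hγ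
  have hα0 : 0 < α := lt_of_le_of_lt hr0 hα
  have hp0 : 0 ≤ α / n := by positivity
  have hp1 : α / n ≤ 1 / 16 := by
    rcases Nat.eq_zero_or_pos n with h | h
    · subst h; norm_num
    · have : (1:ℝ) ≤ n := by exact_mod_cast h
      exact (div_le_self hα0.le this).trans hα1.le
  have hsum1 : ∑ S ∈ (potentialEdges n).powerset, erWeight n (α / n) S = 1 := by
    have := er_sum (n := n) (α / n) (fun _ => 0)
    simpa using this
  have main : ∑ S ∈ (potentialEdges n).powerset,
            erWeight n (α / n) S *
              (tvDist
                  (fun z : ↥S → ZMod 2 =>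
                    ((A.filter (fun x => ∀ e : ↥S, edgeParity x ↑e = z e)).card : ℝ) /
                      (A.card : ℝ))
                  (fun _ : ↥S → ZMod 2 => ((2 : ℝ) ^ S.card)⁻¹)) ^ 2 ≤
      (1 / 4) * (((A.card : ℝ) ^ 2)⁻¹ * ∑ x ∈ A, ∑ y ∈ A,
        ∏ e ∈ potentialEdges n, (1 + (α / n) * ea x y e) - 1) := by
    calc _ ≤ ∑ S ∈ (potentialEdges n).powerset, erWeight n (α / n) S *
          ((1 / 4) * (((A.card : ℝ) ^ 2)⁻¹ * ∑ x ∈ A, ∑ y ∈ A, ∏ e ∈ S, (1 + ea x y e) - 1)) := by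
          refine sum_le_sum fun S _ => mul_le_mul_of_nonneg_left (tv_bound A hA0 S) ?_
          unfold erWeight
          have : 0 ≤ 1 - α / n := by linarith
          positivity
      _ = (1 / 4) * (((A.card : ℝ) ^ 2)⁻¹ * (∑ S ∈ (potentialEdges n).powerset, erWeight n (α / n) S *
            ∑ x ∈ A, ∑ y ∈ A, ∏ e ∈ S, (1 + ea x y e)) -
            ∑ S ∈ (potentialEdges n).powerset, erWeight n (α / n) S) := by
          rw [mul_sum, ← sum_sub_distrib, mul_sum]
          exact sum_congr rfl fun S _ => by ring
      _ = _ := by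
          rw [hsum1]
          congr 3
          simp only [mul_sum]
          rw [sum_comm]
          refine sum_congr rfl fun x _ => ?_
          rw [sum_comm]
          refine sum_congr rfl fun y _ => ?_
          exact er_sum (α / n) (ea x y)
  refine main.trans ?_
  rcases Nat.eq_zero_or_pos n with hn | hn
  · have hE : potentialEdges n = ∅ := by
      subst hn
      exact Finset.eq_empty_of_isEmpty _
    rw [hE]
    simp only [prod_empty, sum_const, nsmul_eq_mul, mul_one]
    rw [← sq, inv_mul_cancel₀ (by positivity)]
    simp only [sub_self, mul_zero]
    positivity
  have hn1 : (1:ℝ) ≤ n := by exact_mod_cast hn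
  have hn0 : (0:ℝ) < n := by linarith
  have hpow : ∀ t : ℝ, (n : ℝ) ^ (-(1 : ℝ) / 10) < t → 1 / (n:ℝ) ≤ t ^ 10 := by
    intro t ht
    have h1 : ((n : ℝ) ^ (-(1 : ℝ) / 10)) ^ 10 ≤ t ^ 10 := by gcongr
    rw [← Real.rpow_natCast, ← Real.rpow_mul hn0.le] at h1
    norm_num at h1
    rw [Real.rpow_neg_one] at h1
    rw [one_div]; exact h1
  have hnα : 1 / (n:ℝ) ≤ α := (hpow α hα).trans (by
    calc α ^ 10 ≤ α ^ 1 := pow_le_pow_of_le_one hα0.le (by linarith) (by norm_num)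
      _ = α := pow_one α)
  have hnγ := hpow γ hγ
  set l := Real.logb 2 (2 / γ) with hl
  have hl1 : 1 ≤ l := by
    rw [hl, Real.le_logb_iff_rpow_le (by norm_num) (by positivity), Real.rpow_one, le_div_iff₀ hγ0]
    linarith
  have hl2 : l ≤ 2 / γ := by
    have hx : 0 < 2 / γ := by positivity
    have hlog2 := Real.log_two_gt_d9
    have h2 := Real.log_le_sub_one_of_pos (by positivity : 0 < (2 / γ) / 2)
    rw [Real.log_div hx.ne' (by norm_num)] at h2
    have hlt := Real.log_two_lt_d9
    rw [hl, Real.logb, div_le_iff₀ (by linarith)]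
    nlinarith
  set c := γ * Real.sqrt n + l with hcdef
  have hc1 : 1 ≤ c := by
    have : 0 ≤ γ * Real.sqrt n := by positivity
    linarith
  have hcA : (2:ℝ) ^ n ≤ 2 ^ c * A.card := by
    calc (2:ℝ) ^ n = 2 ^ c * 2 ^ ((n:ℝ) - c) := by
          rw [← Real.rpow_add (by norm_num), ← Real.rpow_natCast]; congr 1; ring
      _ ≤ 2 ^ c * 2 ^ ((n:ℝ) - c') := by
          have : (2:ℝ) ^ ((n:ℝ) - c) ≤ 2 ^ ((n:ℝ) - c') :=
            Real.rpow_le_rpow_of_exponent_le (by norm_num) (by linarith)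
          gcongr
      _ ≤ _ := by gcongr
  have hcp : c ^ 2 * (α / n) ≤ γ ^ 2 := by
    have h1 : c ^ 2 ≤ 2 * (γ ^ 2 * n) + 2 * l ^ 2 := by
      have : (γ * Real.sqrt n) ^ 2 = γ ^ 2 * n := by rw [mul_pow, Real.sq_sqrt hn0.le]
      nlinarith [sq_nonneg (γ * Real.sqrt n - l)]
    have h2 : l ^ 2 ≤ (2 / γ) ^ 2 := by gcongr
    have h3 : l ^ 2 * (1 / n) ≤ 4 * γ ^ 2 := by
      calc l ^ 2 * (1 / n) ≤ (2 / γ) ^ 2 * γ ^ 10 := by gcongr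
        _ = 4 * γ ^ 8 := by field_simp; ring
        _ ≤ 4 * γ ^ 2 := by
            have := pow_le_pow_of_le_one hγ0.le (by linarith) (by norm_num : 2 ≤ 8)
            linarith
    calc c ^ 2 * (α / n) ≤ (2 * (γ ^ 2 * n) + 2 * l ^ 2) * (α / n) := by gcongr
      _ = α * (2 * γ ^ 2 + 2 * (l ^ 2 * (1 / n))) := by field_simp
      _ ≤ 1 / 16 * (2 * γ ^ 2 + 2 * (4 * γ ^ 2)) := by gcongr
      _ ≤ γ ^ 2 := by nlinarith [sq_nonneg γ]
  have hgauss := sum_gauss A hA0 c (α / n) α hc1 hcA hp0 (by field_simp) (by linarith)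
    (hcp.trans (by nlinarith))
  have hprod : ∑ x ∈ A, ∑ y ∈ A, ∏ e ∈ potentialEdges n, (1 + (α / n) * ea x y e) ≤
      Real.exp (((n:ℝ) ^ 2 - n) / 2 * (-(α / n) ^ 2 / 2 + (α / n) ^ 3) - α / 2) *
        ∑ x ∈ A, ∑ y ∈ A, Real.exp (α / n * SS x y ^ 2 / 2) := by
    simp only [mul_sum]
    refine sum_le_sum fun x _ => sum_le_sum fun y _ => ?_
    have := prod_edges_le x y (α / n) hp0 hp1
    rwa [show (n:ℝ) * (α / n) = α by field_simp] at this
  have hscal := scalar_bound n hn α hα0 hα1 hnα (512 * Real.exp 72 * (c ^ 2 * (α / n))) (by positivity)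
  have hfin : ((A.card : ℝ) ^ 2)⁻¹ * ∑ x ∈ A, ∑ y ∈ A,
        ∏ e ∈ potentialEdges n, (1 + (α / n) * ea x y e) ≤
        1 + 4 * α ^ 3 + 512 * Real.exp 72 * (c ^ 2 * (α / n)) := by
    rw [inv_mul_le_iff₀ (by positivity)]
    refine hprod.trans ((mul_le_mul_of_nonneg_left hgauss (Real.exp_pos _).le).trans ?_)
    rw [mul_left_comm]
    exact mul_le_mul_of_nonneg_left hscal (by positivity)
  have h5 : 512 * Real.exp 72 * (c ^ 2 * (α / n)) ≤ 512 * Real.exp 72 * γ ^ 2 := by gcongr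
  have h6 : α ^ 3 ≤ 512 * Real.exp 72 * α ^ 3 := by
    exact le_mul_of_one_le_left (by positivity) (by linarith)
  have h7 : 0 ≤ 512 * Real.exp 72 * γ ^ 2 := by positivity
  linarith
end

section
/- Let α ∈ (0,1), let G be sampled from the Erdős–Rényi distribution G(n, α/n), and let u ≠ v be two fixed vertices in [n]. Then the probability that G contains a path from u to v (i.e., that u and v lie in the same connected component of G) is at most α / ((1−α)·n). -/
open Finset

lemma walk_card_le (n : ℕ) (v : Fin n) (q : ℕ) : ∀ u : Fin n,
    ((⊤ : SimpleGraph (Fin n)).finsetWalkLength (q + 1) u v).card ≤ n ^ q := by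
  induction q with
  | zero =>
    intro u
    rw [pow_zero, Finset.card_le_one]
    intro a ha b hb
    rw [SimpleGraph.mem_finsetWalkLength_iff] at ha hb
    cases a with
    | nil => simp at ha
    | cons h p =>
      cases b with
      | nil => simp at hb
      | cons h' p' =>
        simp only [SimpleGraph.Walk.length_cons, zero_add, Nat.add_eq_right] at ha hb
        cases p with
        | cons _ _ => simp at ha
        | nil =>
          cases p' with
          | cons _ _ => simp at hb
          | nil => rfl
  | succ q ih =>
    intro u
    rw [SimpleGraph.finsetWalkLength]
    refine Finset.card_biUnion_le.trans ?_
    refine (Finset.sum_le_card_nsmul _ _ (n ^ q) ?_).trans ?_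
    · intro w _
      rw [Finset.card_map]
      exact ih w
    rw [smul_eq_mul, pow_succ, mul_comm]
    refine Nat.mul_le_mul_left _ ?_
    rw [Finset.card_univ]
    exact (Fintype.card_subtype_le _).trans (by simp)

open Classical in
lemma prob_superset (n : ℕ) (p : ℝ) (T : Finset (Sym2 (Fin n))) (hT : T ⊆ potentialEdges n) :
    ∑ S ∈ (potentialEdges n).powerset, (if T ⊆ S then erWeight n p S else 0) = p ^ T.card := by
  rw [← Finset.sum_filter]
  have h := Finset.sum_pow_mul_eq_add_pow p (1 - p) (potentialEdges n \ T)
  rw [add_sub_cancel, one_pow] at h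
  rw [← mul_one (p ^ T.card), ← h, Finset.mul_sum]
  symm
  refine Finset.sum_bij' (fun S _ => T ∪ S) (fun S _ => S \ T) ?_ ?_ ?_ ?_ ?_
  · intro S hS
    simp only [Finset.mem_powerset, Finset.mem_filter] at hS ⊢
    exact ⟨Finset.union_subset hT (hS.trans Finset.sdiff_subset), Finset.subset_union_left⟩
  · intro S hS
    simp only [Finset.mem_powerset, Finset.mem_filter] at hS ⊢
    exact Finset.sdiff_subset_sdiff hS.1 le_rfl
  · intro S hS
    simp only [Finset.mem_powerset] at hS
    ext x
    have := @hS x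
    simp only [Finset.mem_sdiff, Finset.mem_union] at this ⊢
    tauto
  · intro S hS
    simp only [Finset.mem_filter] at hS
    exact Finset.union_sdiff_of_subset hS.2
  · intro S hS
    simp only [Finset.mem_powerset] at hS
    have hd : Disjoint T S := (Finset.disjoint_of_subset_left hS Finset.sdiff_disjoint).symm
    unfold erWeight
    rw [Finset.card_union_of_disjoint hd, Finset.card_sdiff_of_subset hT, pow_add, mul_assoc,
      Nat.sub_sub]

open Classical in
/-- for `α ∈ (0,1)`, `G ∼ G(n, α/n)`, and fixed distinct vertices `u ≠ v`,
the probability that `G` contains a path from `u` to `v` (i.e. `u` and `v` lie in the same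
connected component, i.e. `v` is reachable from `u`) is at most `α/((1−α)·n)`. -/
theorem stmt13 (n : ℕ) (α : ℝ) (hα0 : 0 < α) (hα1 : α < 1)
    (u v : Fin n) (huv : u ≠ v) :
    ∑ S ∈ (potentialEdges n).powerset,
        (if (SimpleGraph.fromEdgeSet (S : Set (Sym2 (Fin n)))).Reachable u v
          then erWeight n (α / n) S else 0)
      ≤ α / ((1 - α) * n) := by
  have hn : 0 < n := u.pos
  have hnR : (1 : ℝ) ≤ n := by exact_mod_cast hn
  have hp0 : 0 ≤ α / n := by positivity
  have hp1 : α / n ≤ 1 := by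
    rw [div_le_one (by linarith)]
    linarith
  have hw : ∀ S, 0 ≤ erWeight n (α / n) S := fun S =>
    mul_nonneg (pow_nonneg hp0 _) (pow_nonneg (by linarith) _)
  let P : ℕ → Finset ((⊤ : SimpleGraph (Fin n)).Walk u v) := fun q =>
    ((⊤ : SimpleGraph (Fin n)).finsetWalkLength (q + 1) u v).filter (fun w => w.IsPath)
  have hnn : ∀ (S : Finset (Sym2 (Fin n))) (w : (⊤ : SimpleGraph (Fin n)).Walk u v),
      0 ≤ (if w.edges.toFinset ⊆ S then erWeight n (α / n) S else 0) := by
    intro S w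
    split_ifs
    · exact hw S
    · exact le_rfl
  calc _ ≤ ∑ S ∈ (potentialEdges n).powerset, ∑ q ∈ Finset.range n, ∑ w ∈ P q,
          (if w.edges.toFinset ⊆ S then erWeight n (α / n) S else 0) := by
        refine Finset.sum_le_sum fun S hS => ?_
        split_ifs with hr
        · obtain ⟨w, hwp⟩ := hr.exists_isPath
          have hlt := hwp.length_lt
          have hne : w.length ≠ 0 := fun h => huv (SimpleGraph.Walk.eq_of_length_eq_zero h)
          rw [Fintype.card_fin] at hlt
          let w' := w.mapLe (le_top : _ ≤ (⊤ : SimpleGraph (Fin n)))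
          have hmem : w' ∈ P (w.length - 1) := by
            simp only [P, Finset.mem_filter, SimpleGraph.mem_finsetWalkLength_iff]
            refine ⟨?_, hwp.mapLe _⟩
            simp only [w', SimpleGraph.Walk.length_mapLe]
            omega
          have hsub : w'.edges.toFinset ⊆ S := by
            intro e he
            rw [List.mem_toFinset, SimpleGraph.Walk.edges_mapLe_eq_edges] at he
            have := w.edges_subset_edgeSet he
            rw [SimpleGraph.edgeSet_fromEdgeSet] at this
            exact_mod_cast this.1
          have h1 := Finset.single_le_sum (f := fun q => ∑ w ∈ P q,
            (if w.edges.toFinset ⊆ S then erWeight n (α / n) S else 0))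
            (fun q _ => Finset.sum_nonneg fun w _ => hnn S w)
            (Finset.mem_range.2 (show w.length - 1 < n by omega))
          refine le_trans ?_ h1
          have h2 := Finset.single_le_sum (f := fun w : (⊤ : SimpleGraph (Fin n)).Walk u v =>
            (if w.edges.toFinset ⊆ S then erWeight n (α / n) S else 0))
            (fun w _ => hnn S w) hmem
          refine le_trans ?_ h2
          simp only [if_pos hsub, le_refl]
        · exact Finset.sum_nonneg fun q _ => Finset.sum_nonneg fun w _ => hnn S w
    _ = ∑ q ∈ Finset.range n, ∑ w ∈ P q, ∑ S ∈ (potentialEdges n).powerset,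
          (if w.edges.toFinset ⊆ S then erWeight n (α / n) S else 0) := by
        rw [Finset.sum_comm]
        exact Finset.sum_congr rfl fun q _ => Finset.sum_comm
    _ = ∑ q ∈ Finset.range n, ∑ w ∈ P q, (α / n) ^ (q + 1) := by
        refine Finset.sum_congr rfl fun q _ => Finset.sum_congr rfl fun w hwm => ?_
        simp only [P, Finset.mem_filter, SimpleGraph.mem_finsetWalkLength_iff] at hwm
        rw [prob_superset, List.toFinset_card_of_nodup hwm.2.isTrail.edges_nodup,
          SimpleGraph.Walk.length_edges, hwm.1]
        intro e he
        rw [List.mem_toFinset] at he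
        simp only [potentialEdges, Finset.mem_filter, Finset.mem_univ, true_and]
        exact SimpleGraph.not_isDiag_of_mem_edgeSet _ (w.edges_subset_edgeSet he)
    _ ≤ ∑ q ∈ Finset.range n, (α / n) * α ^ q := by
        refine Finset.sum_le_sum fun q _ => ?_
        rw [Finset.sum_const, nsmul_eq_mul]
        have hc : ((P q).card : ℝ) ≤ (n : ℝ) ^ q := by
          exact_mod_cast (Finset.card_filter_le _ _).trans (walk_card_le n v q u)
        calc _ ≤ (n : ℝ) ^ q * (α / n) ^ (q + 1) :=
              mul_le_mul_of_nonneg_right hc (pow_nonneg hp0 _)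
          _ = (α / n) * α ^ q := by
              rw [pow_succ, ← mul_assoc, ← mul_pow, mul_div_cancel₀ _ (by linarith), mul_comm]
    _ ≤ (α / n) * (1 / (1 - α)) := by
        rw [← Finset.mul_sum]
        refine mul_le_mul_of_nonneg_left ?_ hp0
        rw [geom_sum_eq hα1.ne, ← neg_div_neg_eq, neg_sub, neg_sub]
        have : 0 ≤ α ^ n := by positivity
        exact div_le_div_of_nonneg_right (by linarith) (by linarith)
    _ = α / ((1 - α) * n) := by
        rw [div_mul_div_comm, mul_one, mul_comm (n : ℝ)]
end
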